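/- arXiv:1607.06962 — 2 statements merged into one kernel-verified Lean document; each statement's English description precedes it below -/
import Mathlib

section
/- Let f(x) = Σ_{i=0}^{n-1} a_i x^{q^i} be a q-polynomial over F_{q^n}. Then D_f = { Tr_{q^n/q}(x)/x : x ∈ F_{q^n}, x ≠ 0 } (equivalently, the linear set L_f of PG(1,q^n) coincides with the linear set defined by the subspace {(x, Tr_{q^n/q}(x)) : x ∈ F_{q^n}}) if and only if there exists λ ∈ F_{q^n} with λ ≠ 0 such that λ·f(x) = Tr_{q^n/q}(λx) for all x ∈ F_{q^n}. -/
/-- A sum of three powers of `q` determines three distinct exponents, sorted version. -/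
theorem eq_of_pow_add_pow_add_pow_eq_of_le {q i j l a b c : ℕ} (hq : 2 ≤ q)
    (hij : i ≤ j) (hjl : j ≤ l) (hab : a < b) (hbc : b < c)
    (h : q ^ i + q ^ j + q ^ l = q ^ a + q ^ b + q ^ c) : i = a ∧ j = b ∧ l = c := by
  have mono : ∀ {s t : ℕ}, s ≤ t → q ^ s ≤ q ^ t := fun h => Nat.pow_le_pow_right (by omega) h
  have step : ∀ {s t : ℕ}, s < t → q * q ^ s ≤ q ^ t := fun {s t} h => by
    rw [← pow_succ']; exact mono h
  have two : ∀ {s t : ℕ}, s < t → 2 * q ^ s ≤ q ^ t := fun h =>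
    (Nat.mul_le_mul_right _ hq).trans (step h)
  have pos : ∀ s : ℕ, 0 < q ^ s := fun s => Nat.pow_pos (by omega)
  have inj : ∀ {s t : ℕ}, q ^ s = q ^ t → s = t := fun h => Nat.pow_right_injective hq h
  have := pos a
  have := pos b
  have := pos i
  have := pos j
  have h1 := two hab
  have h2 := two hbc
  have h3 := mono hij
  have h4 := mono hjl
  rcases lt_trichotomy l c with hlc | rfl | hlc
  · exfalso
    have h5 := step hlc
    rcases (show q = 2 ∨ 3 ≤ q by omega) with rfl | hq3
    · rcases (show l + 1 = c ∨ l + 1 < c by omega) with rfl | hlc'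
      · rw [pow_succ] at h h2
        rcases (show j = l ∨ j < l by omega) with rfl | hjl'
        · have h6 : 2 ^ i = 2 ^ a + 2 ^ b := by omega
          rcases le_or_gt i b with hib | hib
          · have := mono hib
            omega
          · have := two hib
            omega
        · have := two hjl'
          omega
      · have := two hlc'
        rw [pow_succ] at this
        omega
    · have := Nat.mul_le_mul_right (q ^ l) hq3
      omega
  · rcases lt_trichotomy j b with hjb | rfl | hjb
    · have := two hjb
      omega
    · exact ⟨inj (by omega), rfl, rfl⟩
    · have := two hjb
      omega
  · have := two hlc
    omega

/-- A sum of three powers of `q` determines three distinct exponents. -/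
theorem eq_perm_of_pow_add_pow_add_pow_eq {q i j l a b c : ℕ} (hq : 2 ≤ q)
    (hab : a < b) (hbc : b < c) (h : q ^ i + q ^ j + q ^ l = q ^ a + q ^ b + q ^ c) :
    (i = a ∧ j = b ∧ l = c) ∨ (i = a ∧ j = c ∧ l = b) ∨ (i = b ∧ j = a ∧ l = c) ∨
    (i = b ∧ j = c ∧ l = a) ∨ (i = c ∧ j = a ∧ l = b) ∨ (i = c ∧ j = b ∧ l = a) := by
  have key := fun {i j l : ℕ} (hij : i ≤ j) (hjl : j ≤ l) =>
    eq_of_pow_add_pow_add_pow_eq_of_le (i := i) (j := j) (l := l) hq hij hjl hab hbc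
  rcases le_total i j with h1 | h1 <;> rcases le_total j l with h2 | h2 <;>
    rcases le_total i l with h3 | h3
  · have := key h1 h2 (by omega); omega
  · have := key h1 h2 (by omega); omega
  · have := key h3 h2 (by omega); omega
  · have := key h3 h1 (by omega); omega
  · have := key h1 h3 (by omega); omega
  · have := key h2 h3 (by omega); omega
  · have := key h2 h1 (by omega); omega
  · have := key h2 h1 (by omega); omega

theorem eq_perm_of_pow_add_pow_eq {q i j a b : ℕ} (hq : 2 ≤ q) (hab : a < b)
    (h : q ^ i + q ^ j = q ^ a + q ^ b) : (i = a ∧ j = b) ∨ (i = b ∧ j = a) := by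
  have := eq_perm_of_pow_add_pow_add_pow_eq (i := i) (j := j) (l := i + j + b + 1)
    (c := i + j + b + 1) hq hab (by omega) (by omega)
  omega

theorem eq_or_eq_add_of_modEq {A B M : ℕ} (hA : A < B + 2 * M) (hB : B < A + M)
    (h : A ≡ B [MOD M]) : A = B ∨ A = B + M := by
  rcases le_total A B with hle | hle
  · obtain ⟨t, ht⟩ := (Nat.modEq_iff_dvd' hle).1 h
    rcases t with _ | t
    · omega
    · rw [Nat.mul_succ] at ht
      omega
  · obtain ⟨t, ht⟩ := (Nat.modEq_iff_dvd' hle).1 h.symm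
    rcases t with _ | _ | t
    · omega
    · omega
    · rw [Nat.mul_succ, Nat.mul_succ] at ht
      omega

theorem eq_zero_of_pow_modEq_one {q n i : ℕ} (hq : 2 ≤ q) (hi : i < n)
    (h : q ^ i ≡ 1 [MOD q ^ n - 1]) : i = 0 := by
  have h1 : q * q ^ i ≤ q ^ n := by
    rw [← pow_succ']; exact Nat.pow_le_pow_right (by omega) hi
  have h2 := Nat.mul_le_mul_right (q ^ i) hq
  have h3 : 0 < q ^ i := Nat.pow_pos (by omega)
  rcases eq_or_eq_add_of_modEq (by omega) (by omega) h with h4 | h4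
  · exact Nat.pow_right_injective hq (by simpa using h4)
  · omega

theorem eq_perm_of_pow_add_pow_modEq {q n i j k : ℕ} (hq : 2 ≤ q) (hi : i < n) (hj : j < n)
    (hk : 0 < k) (hkn : k < n) (h : q ^ i + q ^ j ≡ 1 + q ^ k [MOD q ^ n - 1]) :
    (i = 0 ∧ j = k) ∨ (i = k ∧ j = 0) := by
  have bound : ∀ {s : ℕ}, s < n → 2 * q ^ s ≤ q ^ n := fun {s} hs =>
    (Nat.mul_le_mul_right _ hq).trans (by
      rw [← pow_succ']; exact Nat.pow_le_pow_right (by omega) hs)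
  have pos : ∀ s : ℕ, 0 < q ^ s := fun s => Nat.pow_pos (by omega)
  have h1 := bound hi
  have h2 := bound hj
  have h3 := bound hkn
  have h4 := pos i
  have h5 := pos j
  have h6 : 2 ≤ q ^ k := hq.trans (Nat.le_self_pow (by omega) q)
  rcases eq_or_eq_add_of_modEq (by omega) (by omega) h with h7 | h7
  · exact eq_perm_of_pow_add_pow_eq hq hk (by simpa using h7)
  · have := eq_perm_of_pow_add_pow_eq hq hkn (i := i) (j := j) (by omega)
    omega

theorem eq_perm_of_pow_add_pow_add_pow_modEq {q n i j l k : ℕ} (hq : 2 ≤ q) (hi : i < n)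
    (hj : j < n) (hl : l < n) (hk : 1 < k) (hkn : k < n)
    (h : q ^ i + q ^ j + q ^ l ≡ 1 + q + q ^ k [MOD q ^ n - 1]) :
    (i = 0 ∧ j = 1 ∧ l = k) ∨ (i = 0 ∧ j = k ∧ l = 1) ∨ (i = 1 ∧ j = 0 ∧ l = k) ∨
    (i = 1 ∧ j = k ∧ l = 0) ∨ (i = k ∧ j = 0 ∧ l = 1) ∨ (i = k ∧ j = 1 ∧ l = 0) := by
  have bound : ∀ {s t : ℕ}, s < t → 2 * q ^ s ≤ q ^ t := fun {s t} hs =>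
    (Nat.mul_le_mul_right _ hq).trans (by
      rw [← pow_succ']; exact Nat.pow_le_pow_right (by omega) hs)
  have pos : ∀ s : ℕ, 0 < q ^ s := fun s => Nat.pow_pos (by omega)
  have h1 := bound hi
  have h2 := bound hj
  have h3 := bound hl
  have h4 := bound hkn
  have h5 := bound hk
  rw [pow_one] at h5
  have := pos i
  have := pos j
  have := pos l
  rcases eq_or_eq_add_of_modEq (by omega) (by omega) h with h7 | h7
  · exact eq_perm_of_pow_add_pow_add_pow_eq hq one_pos hk (by simpa using h7)
  · exfalso
    clear h
    rcases eq_perm_of_pow_add_pow_add_pow_eq hq hk hkn (i := i) (j := j) (l := l)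
      (by rw [pow_one]; omega) with h | h | h | h | h | h <;> obtain ⟨rfl, rfl, rfl⟩ := h <;>
      simp_all

theorem eq_one_of_add_eq_two {F : Type*} [Field F] {u v : F} (huv : u * v = 1) (h : u + v = 2) : u = 1 := by
  have : (u - 1) ^ 2 = 0 := by linear_combination u * h - huv
  exact sub_eq_zero.1 (pow_eq_zero_iff two_ne_zero |>.1 this)

section FiniteField

variable {F : Type*} [Field F] [Fintype F]

theorem sum_units_pow_div_pow [DecidableEq F] (A B : ℕ) :
    ∑ x : Fˣ, (x : F) ^ A / (x : F) ^ B
      = if A ≡ B [MOD Fintype.card F - 1] then -1 else 0 := by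
  have hc : 2 ≤ Fintype.card F := Fintype.one_lt_card
  obtain ⟨M, hM⟩ : ∃ M, Fintype.card F - 1 = M + 1 := ⟨Fintype.card F - 2, by omega⟩
  have h1 : ∀ x : Fˣ, (x : F) ^ A / (x : F) ^ B = (x ^ (A + B * M) : F) := fun x => by
    rw [div_eq_iff (pow_ne_zero _ x.ne_zero), ← pow_add,
      show A + B * M + B = A + (M + 1) * B by ring, pow_add, pow_mul, ← hM,
      FiniteField.pow_card_sub_one_eq_one _ x.ne_zero, one_pow, mul_one]
  rw [Finset.sum_congr rfl fun x _ => h1 x, FiniteField.sum_pow_units F]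
  refine if_congr ?_ rfl rfl
  rw [hM, ← Nat.modEq_zero_iff_dvd]
  have h2 : B + B * M ≡ 0 [MOD M + 1] :=
    (Nat.modEq_zero_iff_dvd).2 ⟨B, by ring⟩
  exact ⟨fun h => Nat.ModEq.add_right_cancel' (B * M) (h.trans h2.symm),
    fun h => (h.add_right _).trans h2⟩

variable {q n : ℕ}

theorem sum_units_linearized_div [DecidableEq F] (hq : 2 ≤ q) (hF : Fintype.card F = q ^ n) (hn : 0 < n)
    (b : ℕ → F) :
    ∑ x : Fˣ, (∑ i ∈ Finset.range n, b i * (x : F) ^ q ^ i) / (x : F) = - b 0 := by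
  have h1 : ∀ x : Fˣ, (∑ i ∈ Finset.range n, b i * (x : F) ^ q ^ i) / (x : F)
      = ∑ i ∈ Finset.range n, b i * ((x : F) ^ q ^ i / (x : F) ^ 1) := fun x => by
    rw [Finset.sum_div]
    exact Finset.sum_congr rfl fun i _ => by rw [pow_one, mul_div_assoc]
  rw [Finset.sum_congr rfl fun x _ => h1 x, Finset.sum_comm]
  simp_rw [← Finset.mul_sum, sum_units_pow_div_pow, hF]
  rw [Finset.sum_eq_single_of_mem 0 (by simpa using hn)]
  · simp [Nat.ModEq.refl]
  · intro i hi hi0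
    rw [if_neg fun h => hi0 (eq_zero_of_pow_modEq_one hq (Finset.mem_range.1 hi) h), mul_zero]

theorem sum_units_linearized_mul_div [DecidableEq F] (hq : 2 ≤ q) (hF : Fintype.card F = q ^ n) {k : ℕ}
    (hk : 0 < k) (hkn : k < n) (b c : ℕ → F) :
    ∑ x : Fˣ, (∑ i ∈ Finset.range n, b i * (x : F) ^ q ^ i)
        * (∑ i ∈ Finset.range n, c i * (x : F) ^ q ^ i) / (x : F) ^ (1 + q ^ k)
      = - (b 0 * c k + b k * c 0) := by
  have h1 : ∀ x : Fˣ, (∑ i ∈ Finset.range n, b i * (x : F) ^ q ^ i)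
        * (∑ i ∈ Finset.range n, c i * (x : F) ^ q ^ i) / (x : F) ^ (1 + q ^ k)
      = ∑ t ∈ Finset.range n ×ˢ Finset.range n, b t.1 * c t.2 *
        ((x : F) ^ (q ^ t.1 + q ^ t.2) / (x : F) ^ (1 + q ^ k)) := fun x => by
    rw [Finset.sum_mul_sum, ← Finset.sum_product', Finset.sum_div]
    exact Finset.sum_congr rfl fun t _ => by rw [pow_add]; ring
  rw [Finset.sum_congr rfl fun x _ => h1 x, Finset.sum_comm]
  simp_rw [← Finset.mul_sum, sum_units_pow_div_pow, hF]
  rw [← Finset.sum_subset (s₁ := {(0, k), (k, 0)})]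
  · rw [Finset.sum_insert (by simp; omega), Finset.sum_singleton]
    have h2 : q ^ k + 1 ≡ 1 + q ^ k [MOD q ^ n - 1] := by rw [add_comm]
    simp [Nat.ModEq.refl, h2]
    ring
  · intro t
    simp only [Finset.mem_insert, Finset.mem_singleton, Finset.mem_product, Finset.mem_range]
    rintro (rfl | rfl) <;> constructor <;> dsimp only <;> omega
  · rintro ⟨i, j⟩ ht hnot
    simp only [Finset.mem_insert, Finset.mem_singleton, Finset.mem_product, Finset.mem_range,
      Prod.mk.injEq] at ht hnot
    rw [if_neg fun h => hnot (eq_perm_of_pow_add_pow_modEq hq ht.1 ht.2 hk hkn h), mul_zero]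

theorem sum_units_linearized_mul_mul_div [DecidableEq F] (hq : 2 ≤ q) (hF : Fintype.card F = q ^ n) {k : ℕ}
    (hk : 1 < k) (hkn : k < n) (b c d : ℕ → F) :
    ∑ x : Fˣ, (∑ i ∈ Finset.range n, b i * (x : F) ^ q ^ i)
        * (∑ i ∈ Finset.range n, c i * (x : F) ^ q ^ i)
        * (∑ i ∈ Finset.range n, d i * (x : F) ^ q ^ i) / (x : F) ^ (1 + q + q ^ k)
      = - (b 0 * c 1 * d k + b 0 * c k * d 1 + b 1 * c 0 * d k + b 1 * c k * d 0
          + b k * c 0 * d 1 + b k * c 1 * d 0) := by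
  have h1 : ∀ x : Fˣ, (∑ i ∈ Finset.range n, b i * (x : F) ^ q ^ i)
        * (∑ i ∈ Finset.range n, c i * (x : F) ^ q ^ i)
        * (∑ i ∈ Finset.range n, d i * (x : F) ^ q ^ i) / (x : F) ^ (1 + q + q ^ k)
      = ∑ t ∈ (Finset.range n ×ˢ Finset.range n) ×ˢ Finset.range n,
        b t.1.1 * c t.1.2 * d t.2 *
        ((x : F) ^ (q ^ t.1.1 + q ^ t.1.2 + q ^ t.2) / (x : F) ^ (1 + q + q ^ k)) := fun x => by
    rw [Finset.sum_mul_sum, ← Finset.sum_product', Finset.sum_mul_sum, ← Finset.sum_product',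
      Finset.sum_div]
    exact Finset.sum_congr rfl fun t _ => by rw [pow_add _ (q ^ t.1.1 + _), pow_add]; ring
  rw [Finset.sum_congr rfl fun x _ => h1 x, Finset.sum_comm]
  simp_rw [← Finset.mul_sum, sum_units_pow_div_pow, hF]
  rw [← Finset.sum_subset (s₁ := {((0, 1), k), ((0, k), 1), ((1, 0), k), ((1, k), 0),
    ((k, 0), 1), ((k, 1), 0)})]
  · have e : ∀ {A : ℕ}, A = 1 + q + q ^ k → A ≡ 1 + q + q ^ k [MOD q ^ n - 1] :=
      fun h => h ▸ Nat.ModEq.refl _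
    have h0 : k ≠ 0 := by omega
    have h1 : k ≠ 1 := by omega
    rw [Finset.sum_insert (by simp [h0, h1, h1.symm]),
      Finset.sum_insert (by simp [h0, h1, h1.symm]),
      Finset.sum_insert (by simp [h0, h1, h1.symm]),
      Finset.sum_insert (by simp [h0, h1, h1.symm]),
      Finset.sum_insert (by simp), Finset.sum_singleton]
    dsimp only
    rw [if_pos (e (by ring)), if_pos (e (by ring)), if_pos (e (by ring)), if_pos (e (by ring)),
      if_pos (e (by ring)), if_pos (e (by ring))]
    ring
  · intro t
    simp only [Finset.mem_insert, Finset.mem_singleton, Finset.mem_product, Finset.mem_range]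
    rintro (rfl | rfl | rfl | rfl | rfl | rfl) <;> refine ⟨⟨?_, ?_⟩, ?_⟩ <;> dsimp only <;> omega
  · rintro ⟨⟨i, j⟩, l⟩ ht hnot
    simp only [Finset.mem_insert, Finset.mem_singleton, Finset.mem_product, Finset.mem_range,
      Prod.mk.injEq, and_assoc] at ht hnot
    rw [if_neg fun h => hnot
      (eq_perm_of_pow_add_pow_add_pow_modEq hq ht.1 ht.2.1 ht.2.2 hk hkn h), mul_zero]

theorem pow_pow_mod_eq (hF : Fintype.card F = q ^ n) (x : F) (m : ℕ) :
    x ^ q ^ (m % n) = x ^ q ^ m := by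
  conv_rhs => rw [← Nat.mod_add_div m n, pow_add, pow_mul, pow_mul q n, ← hF,
    FiniteField.pow_card_pow]

/-- The `q ^ k`-th power of a `q`-polynomial permutes its coefficients cyclically. -/
theorem linearized_pow_pow {p e : ℕ} [Fact p.Prime] [CharP F p] (hq : q = p ^ e)
    (hF : Fintype.card F = q ^ n) {k : ℕ} (hkn : k ≤ n) (a : ℕ → F) (x : F) :
    (∑ i ∈ Finset.range n, a i * x ^ q ^ i) ^ q ^ k
      = ∑ j ∈ Finset.range n, a ((j + (n - k)) % n) ^ q ^ k * x ^ q ^ j := by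
  have h1 : q ^ k = p ^ (e * k) := by rw [hq, pow_mul]
  rw [h1, sum_pow_char_pow, ← h1]
  have cancel : ∀ {i : ℕ}, i < n → ∀ {s t : ℕ}, s + t = n → ((i + s) % n + t) % n = i :=
    fun {i} hi {s t} hst => by
      rw [Nat.mod_add_mod, add_assoc, hst, Nat.add_mod_right, Nat.mod_eq_of_lt hi]
  refine Finset.sum_nbij' (fun i => (i + k) % n) (fun j => (j + (n - k)) % n) ?_ ?_ ?_ ?_ ?_
  · intro i hi
    exact Finset.mem_range.2 (Nat.mod_lt _ (by have := Finset.mem_range.1 hi; omega))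
  · intro i hi
    exact Finset.mem_range.2 (Nat.mod_lt _ (by have := Finset.mem_range.1 hi; omega))
  · intro i hi
    exact cancel (Finset.mem_range.1 hi) (by omega)
  · intro i hi
    exact cancel (Finset.mem_range.1 hi) (by omega)
  · intro i hi
    rw [cancel (Finset.mem_range.1 hi) (by omega), pow_pow_mod_eq hF, mul_pow, ← pow_mul,
      ← pow_add]

/-- Each value of `f x / x` is attained `-1` times modulo the characteristic. -/
theorem sum_units_comp_div {p : ℕ} [Fact p.Prime] [CharP F p] [DecidableEq F] (f : F →+ F)
    (h : F → F) :
    ∑ x : Fˣ, h (f x / x) = - ∑ y ∈ Finset.univ.image (fun x : Fˣ => f x / x), h y := by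
  rw [Finset.sum_comp h (fun x : Fˣ => f x / x), ← Finset.sum_neg_distrib]
  refine Finset.sum_congr rfl fun y hy => ?_
  obtain ⟨x₀, -, hx₀⟩ := Finset.mem_image.1 hy
  let g : F →+ F := f - AddMonoidHom.mulLeft y
  have hg : ∀ x : F, x ∈ g.ker ↔ f x = y * x := fun x => by
    simp [g, AddMonoidHom.mem_ker, sub_eq_zero]
  have hcard : (Finset.univ.filter fun x : Fˣ => f x / x = y).card + 1 = Nat.card g.ker := by
    have h1 : (Finset.univ.filter fun x : F => f x = y * x)
        = insert 0 ((Finset.univ.filter fun x : Fˣ => f x / x = y).map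
          ⟨Units.val, Units.val_injective⟩) := by
      ext x
      simp only [Finset.mem_filter, Finset.mem_univ, true_and, Finset.mem_insert,
        Finset.mem_map, Function.Embedding.coeFn_mk]
      constructor
      · intro hx
        by_cases hx0 : x = 0
        · exact Or.inl hx0
        · exact Or.inr ⟨Units.mk0 x hx0, by simp [div_eq_iff hx0, hx], rfl⟩
      · rintro (rfl | ⟨u, hu, rfl⟩)
        · simp
        · exact (div_eq_iff u.ne_zero).1 hu
    rw [← Finset.card_map ⟨Units.val, Units.val_injective⟩, ← Finset.card_insert_of_notMem, ← h1,
      ← Fintype.card_subtype, ← Nat.card_eq_fintype_card]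
    · exact Nat.card_congr (Equiv.subtypeEquivRight fun x => (hg x).symm)
    · simp
  have hdvd : p ∣ Nat.card g.ker := by
    have hx : (x₀ : F) ∈ g.ker := (hg _).2 ((div_eq_iff x₀.ne_zero).1 hx₀)
    have hord : addOrderOf (⟨x₀, hx⟩ : g.ker) = p := by
      refine addOrderOf_eq_prime ?_ fun h0 => x₀.ne_zero (congrArg Subtype.val h0)
      exact Subtype.ext (by simp [CharP.cast_eq_zero])
    exact hord ▸ addOrderOf_dvd_natCard _
  have h0 : ((Finset.univ.filter fun x : Fˣ => f x / x = y).card : F) = -1 := by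
    rw [eq_neg_iff_add_eq_zero, ← Nat.cast_one, ← Nat.cast_add, hcard]
    exact (CharP.cast_eq_zero_iff F p _).2 hdvd
  rw [nsmul_eq_mul, h0, neg_one_mul]

/-- Hilbert 90 for an extension of finite fields. -/
theorem exists_pow_eq_mul_of_pow_geomSum_eq_one (hq : 2 ≤ q) (hF : Fintype.card F = q ^ n)
    (hn : 0 < n) {b : F} (hb : b ^ (∑ i ∈ Finset.range n, q ^ i) = 1) :
    ∃ l : F, l ≠ 0 ∧ l ^ q = l * b := by
  have hS : (∑ i ∈ Finset.range n, q ^ i) ≠ 0 := by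
    have := Finset.single_le_sum (f := fun i => q ^ i) (fun _ _ => Nat.zero_le _)
      (Finset.mem_range.2 hn)
    simp only [pow_zero] at this
    omega
  have hb0 : b ≠ 0 := by
    rintro rfl
    rw [zero_pow hS] at hb
    exact zero_ne_one hb
  obtain ⟨g, hg⟩ := IsCyclic.exists_generator (α := Fˣ)
  obtain ⟨m, hm⟩ := (mem_powers_iff_mem_zpowers.2 (hg (Units.mk0 b hb0)))
  have hm' : g ^ m = Units.mk0 b hb0 := hm
  have hord : orderOf g = q ^ n - 1 := by
    rw [orderOf_eq_card_of_forall_mem_zpowers hg, Nat.card_units, Nat.card_eq_fintype_card, hF]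
  have hgeom : (∑ i ∈ Finset.range n, q ^ i) * (q - 1) = q ^ n - 1 := by
    obtain ⟨r, rfl⟩ : ∃ r, q = r + 1 := ⟨q - 1, by omega⟩
    have := geom_sum_mul_add r n
    simp only [Nat.add_sub_cancel]
    omega
  have hdvd : q ^ n - 1 ∣ m * ∑ i ∈ Finset.range n, q ^ i := by
    rw [← hord]
    refine orderOf_dvd_of_pow_eq_one ?_
    rw [pow_mul, hm']
    exact Units.ext (by simpa using hb)
  rw [← hgeom, mul_comm m] at hdvd
  obtain ⟨t, rfl⟩ := Nat.dvd_of_mul_dvd_mul_left (Nat.pos_of_ne_zero hS) hdvd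
  refine ⟨((g ^ t : Fˣ) : F), Units.ne_zero _, ?_⟩
  have h1 : b = ((g ^ ((q - 1) * t) : Fˣ) : F) := by rw [hm']; rfl
  rw [h1, ← Units.val_pow_eq_pow_val, ← Units.val_mul, ← pow_mul, ← pow_add]
  congr 2
  obtain ⟨r, rfl⟩ : ∃ r, q = r + 1 := ⟨q - 1, by omega⟩
  simp only [Nat.add_sub_cancel]
  ring

/-- A `q`-polynomial as an additive map. -/
noncomputable def linearizedHom (p e n : ℕ) [Fact p.Prime] [CharP F p] (a : ℕ → F) : F →+ F where
  toFun x := ∑ i ∈ Finset.range n, a i * x ^ (p ^ e) ^ i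
  map_zero' := Finset.sum_eq_zero fun i _ => by
    rw [zero_pow (pow_ne_zero _ (pow_ne_zero _ (Fact.out : p.Prime).ne_zero)), mul_zero]
  map_add' x y := by
    rw [← Finset.sum_add_distrib]
    exact Finset.sum_congr rfl fun i _ => by rw [← pow_mul, add_pow_char_pow, mul_add]

theorem sum_units_comp_div_eq [DecidableEq F] {p e : ℕ} [Fact p.Prime] [CharP F p] (hq : q = p ^ e)
    {a b : ℕ → F}
    (hab : {y : F | ∃ x : F, x ≠ 0 ∧ (∑ i ∈ Finset.range n, a i * x ^ q ^ i) / x = y}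
      = {y : F | ∃ x : F, x ≠ 0 ∧ (∑ i ∈ Finset.range n, b i * x ^ q ^ i) / x = y})
    (h : F → F) :
    ∑ x : Fˣ, h ((∑ i ∈ Finset.range n, a i * (x : F) ^ q ^ i) / x)
      = ∑ x : Fˣ, h ((∑ i ∈ Finset.range n, b i * (x : F) ^ q ^ i) / x) := by
  subst hq
  refine (sum_units_comp_div (p := p) (linearizedHom p e n a) h).trans
    (Eq.trans ?_ (sum_units_comp_div (p := p) (linearizedHom p e n b) h).symm)
  have units : ∀ (c : ℕ → F) (y : F),
      y ∈ Finset.univ.image (fun x : Fˣ => linearizedHom p e n c x / x) ↔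
      y ∈ {y : F | ∃ x : F, x ≠ 0 ∧ (∑ i ∈ Finset.range n, c i * x ^ (p ^ e) ^ i) / x = y} :=
    fun c y => by
      simp only [Finset.mem_image, Finset.mem_univ, true_and, Set.mem_ofPred_eq]
      exact ⟨fun ⟨x, hx⟩ => ⟨x, x.ne_zero, hx⟩, fun ⟨x, hx0, hx⟩ => ⟨Units.mk0 x hx0, hx⟩⟩
  congr 2
  ext y
  rw [units, units, hab]

section Coefficients

variable {p e : ℕ} [Fact p.Prime] [CharP F p] {a b : ℕ → F}

theorem coeff_zero_eq (hq : q = p ^ e) (hq2 : 2 ≤ q) (hF : Fintype.card F = q ^ n) (hn : 0 < n)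
    (hab : {y : F | ∃ x : F, x ≠ 0 ∧ (∑ i ∈ Finset.range n, a i * x ^ q ^ i) / x = y}
      = {y : F | ∃ x : F, x ≠ 0 ∧ (∑ i ∈ Finset.range n, b i * x ^ q ^ i) / x = y}) :
    a 0 = b 0 := by
  classical
  have h := sum_units_comp_div_eq hq hab id
  simp only [id_eq] at h
  rw [sum_units_linearized_div hq2 hF hn, sum_units_linearized_div hq2 hF hn] at h
  exact neg_inj.1 h

theorem coeff_mul_eq (hq : q = p ^ e) (hq2 : 2 ≤ q) (hF : Fintype.card F = q ^ n) {k : ℕ}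
    (hk : 0 < k) (hkn : k < n)
    (hab : {y : F | ∃ x : F, x ≠ 0 ∧ (∑ i ∈ Finset.range n, a i * x ^ q ^ i) / x = y}
      = {y : F | ∃ x : F, x ≠ 0 ∧ (∑ i ∈ Finset.range n, b i * x ^ q ^ i) / x = y}) :
    a k * a (n - k) ^ q ^ k = b k * b (n - k) ^ q ^ k := by
  classical
  have h := sum_units_comp_div_eq hq hab (fun y => y ^ (1 + q ^ k))
  have h0 := coeff_zero_eq hq hq2 hF (by omega) hab
  have key : ∀ c : ℕ → F,
      ∑ x : Fˣ, ((∑ i ∈ Finset.range n, c i * (x : F) ^ q ^ i) / x) ^ (1 + q ^ k)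
        = - (c 0 * c 0 ^ q ^ k + c k * c (n - k) ^ q ^ k) := fun c => by
    simp_rw [div_pow, pow_add _ 1 (q ^ k), pow_one, linearized_pow_pow hq hF hkn.le c]
    have := sum_units_linearized_mul_div hq2 hF hk hkn c
      (fun j => c ((j + (n - k)) % n) ^ q ^ k)
    simp only [pow_add _ 1 (q ^ k), pow_one] at this
    rw [this, zero_add, Nat.mod_eq_of_lt (by omega : n - k < n), Nat.add_sub_cancel' hkn.le,
      Nat.mod_self]
  simp only [key, h0] at h
  exact add_left_cancel (neg_inj.1 h)

theorem coeff_mul_mul_eq (hq : q = p ^ e) (hq2 : 2 ≤ q) (hF : Fintype.card F = q ^ n) {k : ℕ}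
    (hk : 1 < k) (hkn : k < n)
    (hab : {y : F | ∃ x : F, x ≠ 0 ∧ (∑ i ∈ Finset.range n, a i * x ^ q ^ i) / x = y}
      = {y : F | ∃ x : F, x ≠ 0 ∧ (∑ i ∈ Finset.range n, b i * x ^ q ^ i) / x = y}) :
    a 1 * a (k - 1) ^ q * a (n - k) ^ q ^ k + a k * a (n - 1) ^ q * a (n - k + 1) ^ q ^ k
      = b 1 * b (k - 1) ^ q * b (n - k) ^ q ^ k
        + b k * b (n - 1) ^ q * b (n - k + 1) ^ q ^ k := by
  classical
  have h := sum_units_comp_div_eq hq hab (fun y => y ^ (1 + q + q ^ k))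
  have h0 := coeff_zero_eq hq hq2 hF (by omega) hab
  have h1 := coeff_mul_eq hq hq2 hF one_pos (by omega) hab
  have h2 := coeff_mul_eq hq hq2 hF (by omega) hkn hab
  have h3 := congrArg (· ^ q) (coeff_mul_eq hq hq2 hF (k := k - 1) (by omega) (by omega) hab)
  simp only [mul_pow, ← pow_mul, ← pow_succ, show k - 1 + 1 = k by omega,
    show n - (k - 1) = n - k + 1 by omega] at h3
  rw [pow_one] at h1
  have key : ∀ c : ℕ → F,
      ∑ x : Fˣ, ((∑ i ∈ Finset.range n, c i * (x : F) ^ q ^ i) / x) ^ (1 + q + q ^ k)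
        = - (c 0 * c 0 ^ q * c 0 ^ q ^ k + c 0 * c (k - 1) ^ q * c (n - k + 1) ^ q ^ k
          + c 1 * c (n - 1) ^ q * c 0 ^ q ^ k + c 1 * c (k - 1) ^ q * c (n - k) ^ q ^ k
          + c k * c (n - 1) ^ q * c (n - k + 1) ^ q ^ k
          + c k * c 0 ^ q * c (n - k) ^ q ^ k) := fun c => by
    have hp := linearized_pow_pow hq hF (k := 1) (by omega) c
    simp only [pow_one] at hp
    simp_rw [div_pow, pow_add _ (1 + q) (q ^ k), pow_add _ 1 q, pow_one,
      linearized_pow_pow hq hF hkn.le c, hp]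
    have := sum_units_linearized_mul_mul_div hq2 hF hk hkn c
      (fun j => c ((j + (n - 1)) % n) ^ q) (fun j => c ((j + (n - k)) % n) ^ q ^ k)
    simp only [pow_add _ (1 + q) (q ^ k), pow_add _ 1 q, pow_one] at this
    rw [this, zero_add, zero_add, Nat.mod_eq_of_lt (by omega : n - k < n),
      Nat.mod_eq_of_lt (by omega : n - 1 < n), Nat.add_sub_cancel' hkn.le,
      Nat.add_sub_cancel' (by omega : 1 ≤ n), Nat.mod_self, add_comm 1 (n - k),
      Nat.mod_eq_of_lt (by omega : n - k + 1 < n),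
      show k + (n - 1) = k - 1 + n by omega, Nat.add_mod_right,
      Nat.mod_eq_of_lt (by omega : k - 1 < n)]
  simp only [key, h0] at h
  linear_combination -h - b 0 * h3 - b 0 ^ q ^ k * h1 - b 0 ^ q * h2

/-- If a `q`-polynomial has the same set of directions as the trace, then
`a_k = l ^ (q ^ k - 1)` for some nonzero `l`. -/
theorem exists_mul_coeff_eq_pow (hq : q = p ^ e) (hq2 : 2 ≤ q) (hF : Fintype.card F = q ^ n)
    (hn : 0 < n)
    (hab : {y : F | ∃ x : F, x ≠ 0 ∧ (∑ i ∈ Finset.range n, a i * x ^ q ^ i) / x = y}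
      = {y : F | ∃ x : F, x ≠ 0 ∧ (∑ i ∈ Finset.range n, 1 * x ^ q ^ i) / x = y}) :
    ∃ l : F, l ≠ 0 ∧ ∀ k < n, l * a k = l ^ q ^ k := by
  have h0 : a 0 = 1 := coeff_zero_eq (b := fun _ => 1) hq hq2 hF hn hab
  rcases (show n = 1 ∨ 1 < n by omega) with rfl | hn1
  · refine ⟨1, one_ne_zero, fun k hk => ?_⟩
    obtain rfl : k = 0 := by omega
    simp [h0]
  have hmul : ∀ k, 0 < k → k < n → a k * a (n - k) ^ q ^ k = 1 := fun k hk hkn => by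
    simpa using coeff_mul_eq (b := fun _ => 1) hq hq2 hF hk hkn hab
  have hrec : ∀ k, k + 1 < n → a (k + 1) = a 1 * a k ^ q := by
    intro k hk
    rcases Nat.eq_zero_or_pos k with rfl | hk0
    · simp [h0]
    have h1 := hmul 1 one_pos hn1
    have h2 := hmul (k + 1) (by omega) hk
    have h3 := congrArg (· ^ q) (hmul k hk0 (by omega))
    simp only [mul_pow, ← pow_mul, ← pow_succ, one_pow] at h3
    have h4 := coeff_mul_mul_eq (b := fun _ => 1) hq hq2 hF (by omega) hk hab
    simp only [one_pow, mul_one, Nat.add_sub_cancel,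
      show n - (k + 1) + 1 = n - k by omega] at h4
    rw [pow_one] at h1
    have h5 : a 1 * a k ^ q * a (n - (k + 1)) ^ q ^ (k + 1) = 1 := by
      refine eq_one_of_add_eq_two ?_ (h4.trans one_add_one_eq_two)
      linear_combination (a k ^ q * a (n - k) ^ q ^ (k + 1)) *
        (a (k + 1) * a (n - (k + 1)) ^ q ^ (k + 1)) * h1 +
        (a (k + 1) * a (n - (k + 1)) ^ q ^ (k + 1)) * h3 + h2
    linear_combination (a 1 * a k ^ q) * h2 - a (k + 1) * h5
  have hgeom : ∀ k, k < n → a k = a 1 ^ ∑ i ∈ Finset.range k, q ^ i := by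
    intro k
    induction k with
    | zero => intro; simp [h0]
    | succ k ih =>
      intro hk
      rw [hrec k hk, ih (by omega), geom_sum_succ, pow_succ', pow_mul']
  have hnorm : a 1 ^ ∑ i ∈ Finset.range n, q ^ i = 1 := by
    have h1 := hmul 1 one_pos hn1
    obtain ⟨m, rfl⟩ : ∃ m, n = m + 1 := ⟨n - 1, by omega⟩
    rw [pow_one, Nat.add_sub_cancel, hgeom m (by omega)] at h1
    rw [geom_sum_succ, pow_succ', pow_mul', ← h1]
  obtain ⟨l, hl0, hl⟩ := exists_pow_eq_mul_of_pow_geomSum_eq_one hq2 hF hn hnorm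
  refine ⟨l, hl0, fun k => ?_⟩
  induction k with
  | zero => intro; simp [h0]
  | succ k ih =>
    intro hk
    rw [hrec k hk, pow_succ, pow_mul, ← ih (by omega), mul_pow, hl]
    ring

end Coefficients

end FiniteField

/-- a q-polynomial `f` defines the same linear set of PG(1,q^n) as the trace
function `Tr_{q^n/q}` if and only if `λ f(x) = Tr(λ x)` for some nonzero `λ`. -/
theorem stmt_2 (p e n q : ℕ) (hp : p.Prime) (he : 0 < e) (hn : 0 < n) (hq : q = p ^ e)
    (F : Type) [Field F] [Fintype F] (hF : Fintype.card F = q ^ n)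
    (a : ℕ → F) (f : F → F)
    (hf : ∀ x : F, f x = ∑ i ∈ Finset.range n, a i * x ^ q ^ i) :
    {y : F | ∃ x : F, x ≠ 0 ∧ f x / x = y}
        = {y : F | ∃ x : F, x ≠ 0 ∧ (∑ i ∈ Finset.range n, x ^ q ^ i) / x = y}
      ↔ ∃ l : F, l ≠ 0 ∧ ∀ x : F, l * f x = ∑ i ∈ Finset.range n, (l * x) ^ q ^ i := by
  constructor
  · intro h
    have : Fact p.Prime := ⟨hp⟩
    have : CharP F p :=
      charP_of_card_eq_prime_pow (f := e * n) (by rw [hF, hq, pow_mul])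
    have hq2 : 2 ≤ q := hq ▸ hp.two_le.trans (Nat.le_self_pow he.ne' p)
    obtain ⟨l, hl0, hl⟩ := exists_mul_coeff_eq_pow (a := a) hq hq2 hF hn (by
      simpa only [hf, one_mul] using h)
    refine ⟨l, hl0, fun x => ?_⟩
    rw [hf, Finset.mul_sum]
    exact Finset.sum_congr rfl fun i hi => by
      rw [mul_pow, ← hl i (Finset.mem_range.1 hi), mul_assoc]
  · rintro ⟨l, hl0, hl⟩
    have key : ∀ x : F, (∑ i ∈ Finset.range n, (l * x) ^ q ^ i) / (l * x) = f x / x := fun x => by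
      rw [← hl, mul_div_mul_left _ _ hl0]
    ext y
    constructor
    · rintro ⟨x, hx, rfl⟩
      exact ⟨l * x, mul_ne_zero hl0 hx, key x⟩
    · rintro ⟨x, hx, rfl⟩
      refine ⟨l⁻¹ * x, mul_ne_zero (inv_ne_zero hl0) hx, ?_⟩
      rw [← key, mul_inv_cancel_left₀ hl0]
end

section
/- Let W = F_{q^4} × F_{q^4} and let U be an F_q-subspace of W with dim_{F_q} U = 4 such that the maximum field of linearity of L_U is F_q, i.e., for every divisor e of 4 with e > 1 there is no F_{q^e}-subspace U' of W with L_{U'} = L_U. Let ⊥' denote the orthogonal complement with respect to the nondegenerate alternating F_q-bilinear form η'((x,y),(u,v)) = Tr_{q^4/q}(xv − yu) on W viewed as an 8-dimensional F_q-vector space. If V is an F_q-subspace of W with L_V = L_U, then there exists μ ∈ F_{q^4}, μ ≠ 0, such that V = μ·U or V = μ·(U^{⊥'}). -/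
/-- The `F_q`-linear set of PG(1,q^n) defined by a set `S ⊆ F × F`: the set of
one-dimensional `F`-subspaces spanned by the nonzero vectors of `S`. -/
def linSet (F : Type) [Field F] (S : Set (F × F)) : Set (Submodule F (F × F)) :=
  {X | ∃ u ∈ S, u ≠ 0 ∧ X = Submodule.span F {u}}

/-- `b` is obtained from `a` by the twist `aₖ ↦ aₖ λ^{σᵏ - 1}` for some nonzero `λ`. -/
def IsTwist {F : Type} [Field F] (σ : F →+* F) (a₁ a₂ a₃ b₁ b₂ b₃ : F) : Prop :=
  ∃ l : F, l ≠ 0 ∧ b₁ * l = a₁ * σ l ∧ b₂ * l = a₂ * σ (σ l) ∧ b₃ * l = a₃ * σ (σ (σ l))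

lemma isTwist_of_middle_ne_zero {F : Type} [Field F] (σ : F →+* F)
    (h4 : ∀ x, σ (σ (σ (σ x))) = x)
    (h90 : ∀ z, z * σ z * σ (σ z) * σ (σ (σ z)) = 1 → ∃ l, l ≠ 0 ∧ σ l = z * l)
    (h90' : ∀ z, z * σ (σ z) = 1 → ∃ l, l ≠ 0 ∧ σ (σ l) = z * l)
    {a₁ a₂ a₃ b₁ b₂ b₃ : F} (ha : a₂ ≠ 0)
    (h13 : a₁ * σ a₃ = b₁ * σ b₃) (h2 : a₂ * σ (σ a₂) = b₂ * σ (σ b₂))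
    (hP : a₁ * σ a₁ * σ (σ a₂) = b₁ * σ b₁ * σ (σ b₂))
    (hQ : a₂ * σ (σ a₃) * σ a₃ = b₂ * σ (σ b₃) * σ b₃) :
    IsTwist σ a₁ a₂ a₃ b₁ b₂ b₃ := by
  have s0 : ∀ {x : F}, x ≠ 0 → σ x ≠ 0 := fun h => (map_ne_zero σ).2 h
  obtain ⟨l, hl, hl2⟩ := h90' (b₂ / a₂) (by
    have := s0 (s0 ha)
    rw [map_div₀, map_div₀, div_mul_div_comm, ← h2, div_self (mul_ne_zero ha this)])
  have hl1 := s0 hl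
  have hl3 : σ (σ l) ≠ 0 := s0 hl1
  have hl4 : σ (σ (σ l)) ≠ 0 := s0 hl3
  obtain ⟨c₁, hc₁⟩ : ∃ c, b₁ * l = c * σ l := ⟨b₁ * l / σ l, by field_simp⟩
  obtain ⟨c₃, hc₃⟩ : ∃ c, b₃ * l = c * σ (σ (σ l)) := ⟨b₃ * l / σ (σ (σ l)), by field_simp⟩
  have hb₂ : b₂ * l = a₂ * σ (σ l) := by rw [hl2]; field_simp
  have e1 := congrArg σ hc₁
  have e2 := congrArg (fun x => σ (σ x)) hb₂
  have e3 := congrArg σ hc₃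
  simp only [map_mul, h4] at e1 e2 e3
  have e3' := congrArg σ e3
  simp only [map_mul] at e3'
  have key1 : c₁ * σ c₁ = a₁ * σ a₁ := by
    apply mul_left_cancel₀
      (mul_ne_zero (mul_ne_zero (s0 (s0 ha)) hl) (mul_ne_zero hl1 hl3))
    linear_combination (-σ c₁ * σ (σ l) * σ (σ a₂) * l) * hc₁ - b₁ * l * (σ (σ a₂) * l) * e1
      - b₁ * l * σ b₁ * σ l * e2 - l * σ l * σ (σ l) * hP
  have key3 : c₃ * σ c₃ = a₃ * σ a₃ := by
    apply σ.injective
    rw [map_mul, map_mul]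
    apply mul_left_cancel₀ (mul_ne_zero (mul_ne_zero ha hl) (mul_ne_zero hl1 hl3))
    linear_combination (-σ (σ c₃) * σ l * a₂ * σ (σ l)) * e3
      - σ b₃ * σ l * (a₂ * σ (σ l)) * e3' - σ b₃ * σ l * (σ (σ b₃) * σ (σ l)) * hb₂
      - l * σ l * σ (σ l) * hQ
  have key13 : c₁ * σ c₃ = a₁ * σ a₃ := by
    apply mul_left_cancel₀ (mul_ne_zero hl hl1)
    linear_combination (-σ c₃ * l) * hc₁ - b₁ * l * e3 - l * σ l * h13
  have fin : ∀ ε : F, ε * σ ε = 1 → c₁ = a₁ * ε → c₃ = a₃ * ε →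
      IsTwist σ a₁ a₂ a₃ b₁ b₂ b₃ := by
    intro ε hε h1 h3
    have hε' : σ ε * σ (σ ε) = 1 := by rw [← map_mul, hε, map_one]
    have hε'' : σ (σ ε) * σ (σ (σ ε)) = 1 := by rw [← map_mul, hε', map_one]
    obtain ⟨n, hn, hn1⟩ := h90 ε (by
      rw [mul_assoc, hε'', hε, one_mul])
    have hn2 : σ (σ n) = n := by
      rw [hn1, map_mul, hn1]; linear_combination n * hε
    refine ⟨l * n, mul_ne_zero hl hn, ?_, ?_, ?_⟩
    · rw [map_mul, hn1]; rw [h1] at hc₁; linear_combination n * hc₁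
    · rw [map_mul, map_mul, hn2]; linear_combination n * hb₂
    · rw [map_mul, map_mul, map_mul, hn2, hn1]; rw [h3] at hc₃; linear_combination n * hc₃
  by_cases h1 : a₁ = 0
  · have hc1 : c₁ = 0 := by simpa [h1] using key1
    by_cases h3 : a₃ = 0
    · have hc3 : c₃ = 0 := by simpa [h3] using key3
      exact fin 1 (by simp) (by simp [h1, hc1]) (by simp [h3, hc3])
    · have := s0 h3
      refine fin (c₃ / a₃) ?_ (by simp [h1, hc1]) (by field_simp)
      rw [map_div₀, div_mul_div_comm, key3, div_self (mul_ne_zero h3 this)]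
  · have h1' := s0 h1
    have hε : c₁ / a₁ * σ (c₁ / a₁) = 1 := by
      rw [map_div₀, div_mul_div_comm, key1, div_self (mul_ne_zero h1 h1')]
    refine fin (c₁ / a₁) hε (by field_simp) (σ.injective ?_)
    have : c₁ / a₁ * σ c₃ = σ a₃ := by field_simp; exact key13
    rw [map_mul, ← this]
    linear_combination (-σ c₃) * hε

lemma isTwist_of_middle_eq_zero {F : Type} [Field F] (σ : F →+* F)
    (h4 : ∀ x, σ (σ (σ (σ x))) = x)
    (h90 : ∀ z, z * σ z * σ (σ z) * σ (σ (σ z)) = 1 → ∃ l, l ≠ 0 ∧ σ l = z * l)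
    {a₁ a₃ b₁ b₃ : F}
    (h13 : a₁ * σ a₃ = b₁ * σ b₃)
    (hP : a₁ * σ a₁ * σ (σ a₁) * σ (σ (σ a₁)) = b₁ * σ b₁ * σ (σ b₁) * σ (σ (σ b₁)))
    (hQ : a₃ * σ a₃ * σ (σ a₃) * σ (σ (σ a₃)) = b₃ * σ b₃ * σ (σ b₃) * σ (σ (σ b₃))) :
    IsTwist σ a₁ 0 a₃ b₁ 0 b₃ := by
  have s0 : ∀ {x : F}, x ≠ 0 → σ x ≠ 0 := fun h => (map_ne_zero σ).2 h
  have hdiv : ∀ a b : F, a ≠ 0 →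
      a * σ a * σ (σ a) * σ (σ (σ a)) = b * σ b * σ (σ b) * σ (σ (σ b)) →
      (b / a) * σ (b / a) * σ (σ (b / a)) * σ (σ (σ (b / a))) = 1 := by
    intro a b ha h
    have h1 := s0 ha
    have h2 := s0 h1
    have h3 := s0 h2
    simp only [map_div₀]
    field_simp
    exact h.symm
  by_cases h1 : a₁ = 0
  · have hb1 : b₁ = 0 := by simpa [h1] using hP
    by_cases h3 : a₃ = 0
    · have hb3 : b₃ = 0 := by simpa [h3] using hQ
      exact ⟨1, one_ne_zero, by simp [h1, hb1], by simp, by simp [h3, hb3]⟩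
    · have hz := hdiv a₃ b₃ h3 hQ
      set z := b₃ / a₃ with hzdef
      have hb : b₃ = a₃ * z := by rw [hzdef]; field_simp
      have hz0 : z ≠ 0 := by rintro h; simp [h] at hz
      have hz1 := s0 hz0
      obtain ⟨l, hl, hl1⟩ := h90 (σ z)⁻¹ (by
        simp only [map_inv₀, h4]
        rw [← mul_inv, ← mul_inv, ← mul_inv, inv_eq_one, ← hz]; ring)
      refine ⟨l, hl, by simp [h1, hb1], by simp, ?_⟩
      have : σ (σ (σ l)) = z * l := by
        apply σ.injective
        rw [h4, map_mul, hl1]; field_simp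
      rw [this, hb]; ring
  · have hz := hdiv a₁ b₁ h1 hP
    set z := b₁ / a₁ with hzdef
    have hb : b₁ = a₁ * z := by rw [hzdef]; field_simp
    obtain ⟨l, hl, hl1⟩ := h90 z hz
    refine ⟨l, hl, by rw [hl1, hb]; ring, by simp, ?_⟩
    have h3 : σ a₃ = z * σ b₃ := by
      apply mul_left_cancel₀ h1; rw [h13, hb]; ring
    apply σ.injective
    rw [map_mul, map_mul, h4, h3, hl1]; ring

lemma isTwist_or_isTwist_adjoint {F : Type} [Field F] (σ : F →+* F)
    (h4 : ∀ x, σ (σ (σ (σ x))) = x)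
    (h90 : ∀ z, z * σ z * σ (σ z) * σ (σ (σ z)) = 1 → ∃ l, l ≠ 0 ∧ σ l = z * l)
    (h90' : ∀ z, z * σ (σ z) = 1 → ∃ l, l ≠ 0 ∧ σ (σ l) = z * l)
    {a₁ a₂ a₃ b₁ b₂ b₃ : F}
    (h13 : a₁ * σ a₃ = b₁ * σ b₃) (h2 : a₂ * σ (σ a₂) = b₂ * σ (σ b₂))
    (h3 : a₁ * σ a₁ * σ (σ a₂) + a₂ * σ (σ a₃) * σ a₃ =
      b₁ * σ b₁ * σ (σ b₂) + b₂ * σ (σ b₃) * σ b₃)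
    (hN : a₂ = 0 → b₂ = 0 →
      a₁ * σ a₁ * σ (σ a₁) * σ (σ (σ a₁)) + a₃ * σ a₃ * σ (σ a₃) * σ (σ (σ a₃)) =
      b₁ * σ b₁ * σ (σ b₁) * σ (σ (σ b₁)) + b₃ * σ b₃ * σ (σ b₃) * σ (σ (σ b₃))) :
    IsTwist σ a₁ a₂ a₃ b₁ b₂ b₃ ∨
      IsTwist σ (σ a₃) (σ (σ a₂)) (σ (σ (σ a₁))) b₁ b₂ b₃ := by
  have two : ∀ {x y z w : F}, x + y = z + w → x * y = z * w →
      (x = z ∧ y = w) ∨ (y = z ∧ x = w) := by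
    intro x y z w hs hp
    have : (x - z) * (y - z) = 0 := by linear_combination hp - z * hs
    rcases mul_eq_zero.1 this with h | h
    · left; exact ⟨by linear_combination h, by linear_combination hs - h⟩
    · right; exact ⟨by linear_combination h, by linear_combination hs - h⟩
  have e13 := congrArg σ h13
  have e13' := congrArg σ e13
  have e13'' := congrArg σ e13'
  simp only [map_mul, h4] at e13 e13' e13''
  by_cases ha : a₂ = 0
  · have hb : b₂ = 0 := by simpa [ha] using h2
    subst ha hb
    rcases two (hN rfl rfl) (by
      linear_combination
        (σ a₁ * σ (σ a₃)) * (σ (σ a₁) * σ (σ (σ a₃))) * (σ (σ (σ a₁)) * a₃) * h13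
        + (b₁ * σ b₃) * (σ (σ a₁) * σ (σ (σ a₃))) * (σ (σ (σ a₁)) * a₃) * e13
        + (b₁ * σ b₃) * (σ b₁ * σ (σ b₃)) * (σ (σ (σ a₁)) * a₃) * e13'
        + (b₁ * σ b₃) * (σ b₁ * σ (σ b₃)) * (σ (σ b₁) * σ (σ (σ b₃))) * e13'') with ⟨h, h'⟩ | ⟨h, h'⟩
    · left
      exact isTwist_of_middle_eq_zero σ h4 h90 h13 h h'
    · right
      simp only [map_zero]
      refine isTwist_of_middle_eq_zero σ h4 h90 ?_ ?_ ?_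
      · rw [h4]; linear_combination h13
      · rw [h4, ← h]; ring
      · rw [h4, ← h']; ring
  · rcases two h3 (by
      linear_combination (σ a₁ * σ (σ a₃)) * (a₂ * σ (σ a₂)) * h13
        + (b₁ * σ b₃) * (a₂ * σ (σ a₂)) * e13 + (b₁ * σ b₃) * (σ b₁ * σ (σ b₃)) * h2)
      with ⟨h, h'⟩ | ⟨h, h'⟩
    · left
      exact isTwist_of_middle_ne_zero σ h4 h90 h90' ha h13 h2 h h'
    · right
      refine isTwist_of_middle_ne_zero σ h4 h90 h90' (by simpa using ha) ?_ ?_ ?_ ?_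
      · rw [h4]; linear_combination h13
      · rw [h4]; linear_combination h2
      · rw [h4, ← h]; ring
      · rw [h4, h4, ← h']; ring

/-- The exponents `∑ εⱼ qʲ` with `εⱼ ∈ {0, 1}`, listed in increasing order. -/
def binaryExponent (q : ℕ) : Fin 16 → ℕ :=
  ![0, 1, q, q + 1, q ^ 2, q ^ 2 + 1, q ^ 2 + q, q ^ 2 + q + 1,
    q ^ 3, q ^ 3 + 1, q ^ 3 + q, q ^ 3 + q + 1, q ^ 3 + q ^ 2, q ^ 3 + q ^ 2 + 1,
    q ^ 3 + q ^ 2 + q, q ^ 3 + q ^ 2 + q + 1]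

lemma binaryExponent_strictMono {q : ℕ} (hq : 2 ≤ q) : StrictMono (binaryExponent q) := by
  have h2 : 2 * q ≤ q ^ 2 := by nlinarith
  have h3 : 2 * q ^ 2 ≤ q ^ 3 := by
    rw [pow_succ q 2, mul_comm]; exact Nat.mul_le_mul_left _ hq
  rw [Fin.strictMono_iff_lt_succ]
  intro i
  fin_cases i <;> simp [binaryExponent] <;> omega

open Polynomial in
/-- The polynomial `∑ cᵢ X^{eᵢ}` supported on the exponents `eᵢ = binaryExponent q i`. -/
noncomputable def binaryPoly {F : Type} [Field F] (q : ℕ) (c : Fin 16 → F) : F[X] :=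
  ∑ i, C (c i) * X ^ binaryExponent q i

open Polynomial in
lemma coeff_binaryPoly {F : Type} [Field F] {q : ℕ} (hq : 2 ≤ q) (c : Fin 16 → F) (i : Fin 16) :
    (binaryPoly q c).coeff (binaryExponent q i) = c i := by
  simp [binaryPoly, coeff_X_pow, (binaryExponent_strictMono hq).injective.eq_iff]

open Polynomial in
lemma eval_binaryPoly {F : Type} [Field F] (q : ℕ) (c : Fin 16 → F) (m : F) :
    (binaryPoly q c).eval m = ∑ i, c i * m ^ binaryExponent q i := by
  simp [binaryPoly, eval_finsetSum]

open Polynomial in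
lemma natDegree_binaryPoly_le {F : Type} [Field F] {q : ℕ} (hq : 2 ≤ q) (c : Fin 16 → F) :
    (binaryPoly q c).natDegree ≤ q ^ 3 + q ^ 2 + q + 1 := by
  refine natDegree_sum_le_of_forall_le _ _ fun i _ => (natDegree_C_mul_X_pow_le _ _).trans ?_
  exact (binaryExponent_strictMono hq).monotone (Fin.le_last i)

open Polynomial in
lemma binaryPoly_coeff_unique {F : Type} [Field F] [Fintype F] {q : ℕ} (hq : 2 ≤ q)
    (hF : Fintype.card F = q ^ 4) {c d : Fin 16 → F} (hc : c 15 = 1) (hd : d 15 = 1)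
    (h : ∀ m, (binaryPoly q c).eval m ^ (q - 1) = (binaryPoly q d).eval m ^ (q - 1)) :
    c = d := by
  have monic : ∀ c : Fin 16 → F, c 15 = 1 → (binaryPoly q c).Monic := fun c hc =>
    monic_of_natDegree_le_of_coeff_eq_one _ (natDegree_binaryPoly_le hq c)
      ((coeff_binaryPoly hq c 15).trans hc)
  have deg : ∀ c : Fin 16 → F, (binaryPoly q c ^ (q - 1)).natDegree < Fintype.card F := by
    intro c
    refine (natDegree_pow_le.trans (Nat.mul_le_mul_left _ (natDegree_binaryPoly_le hq c))).trans_lt ?_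
    rw [hF]
    obtain ⟨k, rfl⟩ : ∃ k, q = k + 1 := ⟨q - 1, by omega⟩
    simp only [Nat.add_sub_cancel]
    ring_nf
    omega
  have hpow : binaryPoly q c ^ (q - 1) = binaryPoly q d ^ (q - 1) := by
    refine eq_of_natDegree_lt_card_of_eval_eq _ _ (f := id) Function.injective_id ?_ ?_
    · intro m; simpa using h m
    · exact max_lt (deg c) (deg d)
  have hq0 : q - 1 ≠ 0 := by omega
  have : binaryPoly q c = binaryPoly q d := by
    refine eq_of_monic_of_associated (monic c hc) (monic d hd) (associated_of_dvd_dvd ?_ ?_)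
    · exact (IsIntegrallyClosed.pow_dvd_pow_iff hq0).1 hpow.dvd
    · exact (IsIntegrallyClosed.pow_dvd_pow_iff hq0).1 hpow.symm.dvd
  funext i
  rw [← coeff_binaryPoly hq c i, this, coeff_binaryPoly hq]

/-- The determinant of a `3 × 3` matrix given by its entries. -/
def det₃ {F : Type} [Field F] (a b c d e f g h i : F) : F :=
  a * (e * i - f * h) - b * (d * i - f * g) + c * (d * h - e * g)

/-- The Dickson matrix of `x ↦ a₀ x + a₁ σ x + a₂ σ² x + a₃ σ³ x`. -/
def dicksonMatrix {F : Type} [Field F] (σ : F →+* F) (a₀ a₁ a₂ a₃ : F) :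
    Matrix (Fin 4) (Fin 4) F :=
  !![a₀, a₁, a₂, a₃;
    σ a₃, σ a₀, σ a₁, σ a₂;
    σ (σ a₂), σ (σ a₃), σ (σ a₀), σ (σ a₁);
    σ (σ (σ a₁)), σ (σ (σ a₂)), σ (σ (σ a₃)), σ (σ (σ a₀))]

/-- The signed principal minors of a Dickson matrix. -/
def dicksonMinors {F : Type} [Field F] (σ : F →+* F) (a₀ a₁ a₂ a₃ : F) : Fin 16 → F :=
  let x₀ := a₀
  let x₁ := σ a₀
  let x₂ := σ (σ a₀)
  let x₃ := σ (σ (σ a₀))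
  let p₁ := σ a₁
  let p₂ := σ (σ a₁)
  let p₃ := σ (σ (σ a₁))
  let r₁ := σ a₂
  let r₂ := σ (σ a₂)
  let r₃ := σ (σ (σ a₂))
  let s₁ := σ a₃
  let s₂ := σ (σ a₃)
  let s₃ := σ (σ (σ a₃))
  ![(dicksonMatrix σ a₀ a₁ a₂ a₃).det,
    -det₃ x₁ p₁ r₁ s₂ x₂ p₂ r₃ s₃ x₃,
    -det₃ x₀ a₂ a₃ r₂ x₂ p₂ p₃ s₃ x₃,
    x₂ * x₃ - p₂ * s₃,
    -det₃ x₀ a₁ a₃ s₁ x₁ r₁ p₃ r₃ x₃,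
    x₁ * x₃ - r₁ * r₃,
    x₀ * x₃ - a₃ * p₃,
    -x₃,
    -det₃ x₀ a₁ a₂ s₁ x₁ p₁ r₂ s₂ x₂,
    x₁ * x₂ - p₁ * s₂,
    x₀ * x₂ - a₂ * r₂,
    -x₂,
    x₀ * x₁ - a₁ * s₁,
    -x₁,
    -x₀,
    1]

lemma det_dicksonMatrix {F : Type} [Field F] (σ : F →+* F) (a₀ a₁ a₂ a₃ : F) :
    (dicksonMatrix σ a₀ a₁ a₂ a₃).det =
      a₀ * det₃ (σ a₀) (σ a₁) (σ a₂) (σ (σ a₃)) (σ (σ a₀)) (σ (σ a₁))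
        (σ (σ (σ a₂))) (σ (σ (σ a₃))) (σ (σ (σ a₀)))
      - a₁ * det₃ (σ a₃) (σ a₁) (σ a₂) (σ (σ a₂)) (σ (σ a₀)) (σ (σ a₁))
        (σ (σ (σ a₁))) (σ (σ (σ a₃))) (σ (σ (σ a₀)))
      + a₂ * det₃ (σ a₃) (σ a₀) (σ a₂) (σ (σ a₂)) (σ (σ a₃)) (σ (σ a₁))
        (σ (σ (σ a₁))) (σ (σ (σ a₂))) (σ (σ (σ a₀)))
      - a₃ * det₃ (σ a₃) (σ a₀) (σ a₁) (σ (σ a₂)) (σ (σ a₃)) (σ (σ a₀))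
        (σ (σ (σ a₁))) (σ (σ (σ a₂))) (σ (σ (σ a₃))) := by
  simp [dicksonMatrix, Matrix.det_succ_row_zero, Fin.sum_univ_succ, Fin.succAbove, det₃]
  ring

lemma map_det_dicksonMatrix {F : Type} [Field F] (σ : F →+* F)
    (h4 : ∀ x, σ (σ (σ (σ x))) = x) (a₀ a₁ a₂ a₃ : F) :
    σ (dicksonMatrix σ a₀ a₁ a₂ a₃).det = (dicksonMatrix σ a₀ a₁ a₂ a₃).det := by
  simp only [det_dicksonMatrix, det₃, map_add, map_sub, map_mul, h4]
  ring

lemma eval_binaryPoly_dicksonMinors {F : Type} [Field F] {q : ℕ} (σ : F →+* F)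
    (hσ : ∀ x, σ x = x ^ q) (a₀ a₁ a₂ a₃ m : F) :
    (binaryPoly q (dicksonMinors σ a₀ a₁ a₂ a₃)).eval m =
      (dicksonMatrix σ (a₀ - m) a₁ a₂ a₃).det := by
  have e1 : m ^ q = σ m := (hσ m).symm
  have e2 : m ^ q ^ 2 = σ (σ m) := by rw [hσ, hσ, ← pow_mul, sq]
  have e3 : m ^ q ^ 3 = σ (σ (σ m)) := by rw [hσ, hσ, hσ, ← pow_mul, ← pow_mul]; congr 1; ring
  simp only [eval_binaryPoly, dicksonMinors, binaryExponent, Fin.sum_univ_succ, Fin.sum_univ_zero]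
  simp only [Matrix.cons_val_zero, Matrix.cons_val_succ, pow_add, e1, e2, e3, pow_zero, pow_one,
    det_dicksonMatrix, det₃, map_sub]
  ring

lemma dicksonMinors_eq {F : Type} [Field F] [Fintype F] {q : ℕ} (hq : 2 ≤ q)
    (hF : Fintype.card F = q ^ 4) (σ : F →+* F) (hσ : ∀ x, σ x = x ^ q)
    (h4 : ∀ x, σ (σ (σ (σ x))) = x) {a₀ a₁ a₂ a₃ b₀ b₁ b₂ b₃ : F}
    (h : ∀ m, (dicksonMatrix σ (a₀ - m) a₁ a₂ a₃).det = 0 ↔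
      (dicksonMatrix σ (b₀ - m) b₁ b₂ b₃).det = 0) :
    dicksonMinors σ a₀ a₁ a₂ a₃ = dicksonMinors σ b₀ b₁ b₂ b₃ := by
  have hone : ∀ x : F, x ≠ 0 → σ x = x → x ^ (q - 1) = 1 := by
    intro x hx hxσ
    apply mul_right_cancel₀ hx
    rw [← pow_succ, Nat.sub_add_cancel (by omega), ← hσ, hxσ, one_mul]
  refine binaryPoly_coeff_unique hq hF rfl rfl fun m => ?_
  rw [eval_binaryPoly_dicksonMinors σ hσ, eval_binaryPoly_dicksonMinors σ hσ]
  by_cases hm : (dicksonMatrix σ (a₀ - m) a₁ a₂ a₃).det = 0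
  · rw [hm, (h m).1 hm]
  · rw [hone _ hm (map_det_dicksonMatrix σ h4 _ _ _ _),
      hone _ (fun e => hm ((h m).2 e)) (map_det_dicksonMatrix σ h4 _ _ _ _)]

lemma eq_zero_of_sum_frobenius {F : Type} [Field F] [Fintype F] {q : ℕ} (hq : 2 ≤ q)
    (hF : Fintype.card F = q ^ 4) (σ : F →+* F) (hσ : ∀ x, σ x = x ^ q)
    {a₀ a₁ a₂ a₃ : F}
    (h : ∀ x, a₀ * x + a₁ * σ x + a₂ * σ (σ x) + a₃ * σ (σ (σ x)) = 0) :
    a₀ = 0 ∧ a₁ = 0 ∧ a₂ = 0 ∧ a₃ = 0 := by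
  let c : Fin 16 → F := ![0, a₀, a₁, 0, a₂, 0, 0, 0, a₃, 0, 0, 0, 0, 0, 0, 0]
  have hq4 : q ^ 3 + q ^ 2 + q + 1 < q ^ 4 := by
    nlinarith [pow_le_pow_left₀ (by omega) hq 3, pow_le_pow_left₀ (by omega) hq 2]
  have hz : binaryPoly q c = 0 := by
    refine Polynomial.eq_zero_of_natDegree_lt_card_of_eval_eq_zero _ (f := id)
      Function.injective_id (fun m => ?_) ?_
    · have e2 : m ^ q ^ 2 = σ (σ m) := by rw [hσ, hσ, ← pow_mul, sq]
      have e3 : m ^ q ^ 3 = σ (σ (σ m)) := by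
        rw [hσ, hσ, hσ, ← pow_mul, ← pow_mul]; congr 1; ring
      rw [← h m]
      simp [eval_binaryPoly, c, binaryExponent, Fin.sum_univ_succ, e2, e3, ← hσ]
      ring
    · rw [hF]; exact (natDegree_binaryPoly_le hq c).trans_lt hq4
  have hc : ∀ i, c i = 0 := fun i => by rw [← coeff_binaryPoly hq c i, hz, Polynomial.coeff_zero]
  exact ⟨hc 1, hc 2, hc 4, hc 8⟩

lemma det_dicksonMatrix_eq_zero_iff {F : Type} [Field F] [Fintype F] {q : ℕ} (hq : 2 ≤ q)
    (hF : Fintype.card F = q ^ 4) (σ : F →+* F) (hσ : ∀ x, σ x = x ^ q)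
    (h4 : ∀ x, σ (σ (σ (σ x))) = x) {a₀ a₁ a₂ a₃ : F} :
    (dicksonMatrix σ a₀ a₁ a₂ a₃).det = 0 ↔
      ∃ x, x ≠ 0 ∧ a₀ * x + a₁ * σ x + a₂ * σ (σ x) + a₃ * σ (σ (σ x)) = 0 := by
  constructor
  · intro h
    obtain ⟨v, hv, hvM⟩ := Matrix.exists_vecMul_eq_zero_iff.2 h
    by_contra! hx
    let f : F →+ F :=
      { toFun := fun x => a₀ * x + a₁ * σ x + a₂ * σ (σ x) + a₃ * σ (σ (σ x))
        map_zero' := by simp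
        map_add' := fun x y => by simp only [map_add]; ring }
    have hinj : Function.Injective f := by
      rw [injective_iff_map_eq_zero]
      intro x hx0
      by_contra hne
      exact hx x hne hx0
    have hsurj := Finite.surjective_of_injective hinj
    have m0 := congrFun hvM 0
    have m1 := congrFun hvM 1
    have m2 := congrFun hvM 2
    have m3 := congrFun hvM 3
    simp [Matrix.vecMul, dotProduct, Fin.sum_univ_four, dicksonMatrix] at m0 m1 m2 m3
    have : v 0 = 0 ∧ v 1 = 0 ∧ v 2 = 0 ∧ v 3 = 0 := by
      refine eq_zero_of_sum_frobenius hq hF σ hσ fun y => ?_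
      obtain ⟨x, rfl⟩ := hsurj y
      simp only [f, AddMonoidHom.coe_mk, ZeroHom.coe_mk, map_add, map_mul, h4]
      linear_combination x * m0 + σ x * m1 + σ (σ x) * m2 + σ (σ (σ x)) * m3
    apply hv
    funext i
    fin_cases i
    exacts [this.1, this.2.1, this.2.2.1, this.2.2.2]
  · rintro ⟨x, hx, h⟩
    refine Matrix.exists_mulVec_eq_zero_iff.1 ⟨![x, σ x, σ (σ x), σ (σ (σ x))], ?_, ?_⟩
    · intro e; exact hx (congrFun e 0)
    · have h1 := congrArg σ h
      have h2 := congrArg σ h1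
      have h3 := congrArg σ h2
      simp only [map_add, map_mul, h4, map_zero] at h1 h2 h3
      funext i
      fin_cases i <;>
        simp [Matrix.mulVec, dotProduct, Fin.sum_univ_four, dicksonMatrix]
      · exact h
      · linear_combination h1
      · linear_combination h2
      · linear_combination h3

lemma exists_pow_eq_of_pow_eq_one {F : Type} [Field F] [Fintype F] {d k : ℕ}
    (hdk : Fintype.card F = d * k + 1) {z : F} (hz : z ^ k = 1) : ∃ y, y ≠ 0 ∧ y ^ d = z := by
  classical
  have hcard : Nat.card Fˣ = d * k := by
    rw [Nat.card_eq_fintype_card, Fintype.card_units, hdk, Nat.add_sub_cancel]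
  have hpos : 0 < d * k := hcard ▸ Nat.card_pos
  have hk : 0 < k := Nat.pos_of_mul_pos_left hpos
  obtain ⟨g, hg⟩ := IsCyclic.exists_generator (α := Fˣ)
  have hz0 : z ≠ 0 := by rintro rfl; rw [zero_pow hk.ne'] at hz; exact zero_ne_one hz
  obtain ⟨j, hj⟩ := (mem_powers_iff_mem_zpowers.2 (hg (Units.mk0 z hz0)))
  simp only at hj
  have h1 : g ^ (j * k) = 1 := by
    rw [pow_mul, hj]; ext; simpa using hz
  have h2 : d * k ∣ j * k := by
    rw [← hcard, ← orderOf_eq_card_of_forall_mem_zpowers hg]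
    exact orderOf_dvd_of_pow_eq_one h1
  obtain ⟨i, rfl⟩ := Nat.dvd_of_mul_dvd_mul_right hk h2
  refine ⟨(g ^ i : Fˣ), Units.ne_zero _, ?_⟩
  rw [← Units.val_pow_eq_pow_val, ← pow_mul, mul_comm, hj, Units.val_mk0]

lemma hilbert90_quartic {F : Type} [Field F] [Fintype F] {q : ℕ} (hq : 2 ≤ q)
    (hF : Fintype.card F = q ^ 4) (σ : F →+* F) (hσ : ∀ x, σ x = x ^ q) (z : F)
    (hz : z * σ z * σ (σ z) * σ (σ (σ z)) = 1) : ∃ l, l ≠ 0 ∧ σ l = z * l := by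
  obtain ⟨y, hy, h⟩ := exists_pow_eq_of_pow_eq_one (d := q - 1) (k := 1 + q + q ^ 2 + q ^ 3) (z := z)
    (by
      rw [hF]
      obtain ⟨k, rfl⟩ : ∃ k, q = k + 1 := ⟨q - 1, by omega⟩
      simp only [Nat.add_sub_cancel]
      ring)
    (by
      rw [← hz]; simp only [hσ]; ring)
  refine ⟨y, hy, ?_⟩
  rw [← h, ← pow_succ, Nat.sub_add_cancel (by omega), hσ]

lemma hilbert90_quadratic {F : Type} [Field F] [Fintype F] {q : ℕ} (hq : 2 ≤ q)
    (hF : Fintype.card F = q ^ 4) (σ : F →+* F) (hσ : ∀ x, σ x = x ^ q) (z : F)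
    (hz : z * σ (σ z) = 1) : ∃ l, l ≠ 0 ∧ σ (σ l) = z * l := by
  have hq2 : 1 ≤ q ^ 2 := Nat.one_le_pow _ _ (by omega)
  obtain ⟨y, hy, h⟩ := exists_pow_eq_of_pow_eq_one (d := q ^ 2 - 1) (k := 1 + q ^ 2) (z := z)
    (by
      rw [hF]
      obtain ⟨k, hk⟩ : ∃ k, q ^ 2 = k + 1 := ⟨q ^ 2 - 1, by omega⟩
      rw [show q ^ 4 = (q ^ 2) ^ 2 by ring, hk]
      simp only [Nat.add_sub_cancel]
      ring)
    (by
      rw [← hz]; simp only [hσ]; ring)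
  refine ⟨y, hy, ?_⟩
  rw [← h, ← pow_succ, Nat.sub_add_cancel hq2, hσ, hσ]; ring

lemma eq_and_isTwist_of_same_slopes {F : Type} [Field F] [Fintype F] {q : ℕ} (hq : 2 ≤ q)
    (hF : Fintype.card F = q ^ 4) (σ : F →+* F) (hσ : ∀ x, σ x = x ^ q)
    (h4 : ∀ x, σ (σ (σ (σ x))) = x) {a₀ a₁ a₂ a₃ b₀ b₁ b₂ b₃ : F}
    (h : ∀ m, (∃ x, x ≠ 0 ∧ a₀ * x + a₁ * σ x + a₂ * σ (σ x) + a₃ * σ (σ (σ x)) = m * x) ↔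
      ∃ x, x ≠ 0 ∧ b₀ * x + b₁ * σ x + b₂ * σ (σ x) + b₃ * σ (σ (σ x)) = m * x) :
    a₀ = b₀ ∧ (IsTwist σ a₁ a₂ a₃ b₁ b₂ b₃ ∨
      IsTwist σ (σ a₃) (σ (σ a₂)) (σ (σ (σ a₁))) b₁ b₂ b₃) := by
  have key : ∀ a₀ a₁ a₂ a₃ m : F, (dicksonMatrix σ (a₀ - m) a₁ a₂ a₃).det = 0 ↔
      ∃ x, x ≠ 0 ∧ a₀ * x + a₁ * σ x + a₂ * σ (σ x) + a₃ * σ (σ (σ x)) = m * x := by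
    intro a₀ a₁ a₂ a₃ m
    rw [det_dicksonMatrix_eq_zero_iff hq hF σ hσ h4]
    refine exists_congr fun x => and_congr_right fun _ => ?_
    rw [← sub_eq_zero (b := m * x)]
    ring_nf
  have hD := dicksonMinors_eq hq hF σ hσ h4
    (fun m => ((key a₀ a₁ a₂ a₃ m).trans (h m)).trans (key b₀ b₁ b₂ b₃ m).symm)
  have h0 : a₀ = b₀ := neg_injective (congrFun hD 14)
  subst h0
  refine ⟨rfl, isTwist_or_isTwist_adjoint σ h4 (hilbert90_quartic hq hF σ hσ)
    (hilbert90_quadratic hq hF σ hσ) ?_ ?_ ?_ ?_⟩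
  all_goals
    have e12 : a₀ * σ a₀ - a₁ * σ a₃ = a₀ * σ a₀ - b₁ * σ b₃ := congrFun hD 12
    have e10 : a₀ * σ (σ a₀) - a₂ * σ (σ a₂) = a₀ * σ (σ a₀) - b₂ * σ (σ b₂) := congrFun hD 10
  · linear_combination -e12
  · linear_combination -e10
  · have e8 : -det₃ a₀ a₁ a₂ (σ a₃) (σ a₀) (σ a₁) (σ (σ a₂)) (σ (σ a₃)) (σ (σ a₀)) =
        -det₃ a₀ b₁ b₂ (σ b₃) (σ a₀) (σ b₁) (σ (σ b₂)) (σ (σ b₃)) (σ (σ a₀)) := congrFun hD 8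
    have f12 := congrArg σ e12
    simp only [map_sub, map_mul] at f12
    simp only [det₃] at e8
    linear_combination -e8 - σ (σ a₀) * e12 - a₀ * f12 - σ a₀ * e10
  · rintro rfl rfl
    have e0 : (dicksonMatrix σ a₀ a₁ 0 a₃).det = (dicksonMatrix σ a₀ b₁ 0 b₃).det := congrFun hD 0
    have f12 := congrArg σ e12
    have g12 := congrArg σ f12
    have k12 := congrArg σ g12
    simp only [map_sub, map_mul, h4] at f12 g12 k12
    simp only [det_dicksonMatrix, det₃, map_zero] at e0
    have p0 : a₁ * σ a₃ = b₁ * σ b₃ := by linear_combination -e12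
    have p1 : σ a₁ * σ (σ a₃) = σ b₁ * σ (σ b₃) := by linear_combination -f12
    have p2 : σ (σ a₁) * σ (σ (σ a₃)) = σ (σ b₁) * σ (σ (σ b₃)) := by linear_combination -g12
    have p3 : σ (σ (σ a₁)) * a₃ = σ (σ (σ b₁)) * b₃ := by linear_combination -k12
    linear_combination -e0 - σ (σ a₀) * σ (σ (σ a₀)) * p0 - a₀ * σ (σ (σ a₀)) * p1
      - a₀ * σ a₀ * p2 - σ a₀ * σ (σ a₀) * p3 + σ (σ a₁) * σ (σ (σ a₃)) * p0 + b₁ * σ b₃ * p2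
      + σ a₁ * σ (σ a₃) * p3 + σ (σ (σ b₁)) * b₃ * p1

lemma card_le_of_bilinear_roots {F : Type} [Field F] {q : ℕ} (hq : 2 ≤ q) {c₀ c₁ c₂ c₃ : F}
    (hc : c₃ ≠ 0) (T : Finset F)
    (hT : ∀ m ∈ T, c₀ + c₁ * m + c₂ * m ^ q + c₃ * m ^ (q + 1) = 0) : T.card ≤ q + 1 := by
  open Polynomial in
  let P : F[X] := C c₀ + C c₁ * X + C c₂ * X ^ q + C c₃ * X ^ (q + 1)
  have hcoeff : P.coeff (q + 1) = c₃ := by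
    have h1 : q ≠ 0 := by omega
    simp [P, Polynomial.coeff_X_pow, Polynomial.coeff_C, h1]
  have hP : P ≠ 0 := by
    intro h; rw [h, Polynomial.coeff_zero] at hcoeff; exact hc hcoeff.symm
  have hdeg : P.natDegree ≤ q + 1 := by
    refine Polynomial.natDegree_add_le_of_degree_le (Polynomial.natDegree_add_le_of_degree_le
      (Polynomial.natDegree_add_le_of_degree_le ?_ ?_) ?_) ?_
    · simp
    · exact (Polynomial.natDegree_C_mul_le _ _).trans (Polynomial.natDegree_X_le.trans (by omega))
    · exact (Polynomial.natDegree_C_mul_X_pow_le _ _).trans (by omega)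
    · exact Polynomial.natDegree_C_mul_X_pow_le _ _
  refine (Polynomial.card_le_degree_of_subset_roots (p := P) fun m hm => ?_).trans hdeg
  rw [Polynomial.mem_roots hP, Polynomial.IsRoot.def, ← hT m hm]
  simp [P]

lemma det₃_eq_zero {F : Type} [Field F] {a b c d e f g h i x y z : F} (hz : z ≠ 0)
    (h₀ : a * x + b * y + c * z = 0) (h₁ : d * x + e * y + f * z = 0)
    (h₂ : g * x + h * y + i * z = 0) : det₃ a b c d e f g h i = 0 := by
  apply mul_right_cancel₀ hz
  unfold det₃
  linear_combination (d * h - e * g) * h₀ - (a * h - b * g) * h₁ + (a * e - b * d) * h₂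

lemma card_heavy_slopes_le {F : Type} [Field F] {q : ℕ} (hq : 2 ≤ q)
    (σ : F →+* F) (hσ : ∀ x, σ x = x ^ q)
    (h4 : ∀ x, σ (σ (σ (σ x))) = x) {a₀ a₁ a₂ a₃ : F} (ha : ¬ (a₁ = 0 ∧ a₃ = 0))
    (T : Finset F)
    (hT : ∀ m ∈ T, ∃ x y, x * σ y ≠ y * σ x ∧
      a₀ * x + a₁ * σ x + a₂ * σ (σ x) + a₃ * σ (σ (σ x)) = m * x ∧
      a₀ * y + a₁ * σ y + a₂ * σ (σ y) + a₃ * σ (σ (σ y)) = m * y) :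
    T.card ≤ q + 1 := by
  have hne : ∀ {x y : F}, x * σ y ≠ y * σ x →
      σ (σ x) * σ (σ (σ y)) - σ (σ y) * σ (σ (σ x)) ≠ 0 := by
    intro x y h e
    apply h
    apply σ.injective
    apply σ.injective
    simp only [map_mul]
    exact sub_eq_zero.1 e
  by_cases h3 : a₃ = 0
  · have h1 : a₁ ≠ 0 := fun h => ha ⟨h, h3⟩
    refine card_le_of_bilinear_roots hq (c₃ := σ (σ a₁))
      (c₂ := -(a₀ * σ (σ a₁)) + a₃ * σ (σ a₂))
      (c₁ := -(σ a₀ * σ (σ a₁) - σ a₂ * σ (σ a₃)))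
      (c₀ := det₃ a₀ a₁ a₃ (σ a₃) (σ a₀) (σ a₂) (σ (σ a₂)) (σ (σ a₃)) (σ (σ a₁)))
      (by simpa using h1) T fun m hm => ?_
    obtain ⟨x, y, hxy, hx, hy⟩ := hT m hm
    have hx1 := congrArg σ hx
    have hx2 := congrArg σ hx1
    have hy1 := congrArg σ hy
    have hy2 := congrArg σ hy1
    simp only [map_add, map_mul, h4] at hx1 hx2 hy1 hy2
    have := det₃_eq_zero (a := a₀ - m) (b := a₁) (c := a₃) (d := σ a₃) (e := σ a₀ - σ m)
      (f := σ a₂) (g := σ (σ a₂)) (h := σ (σ a₃)) (i := σ (σ a₁))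
      (x := σ (σ x) * y - σ (σ y) * x) (y := σ (σ x) * σ y - σ (σ y) * σ x) (hne hxy)
      (by linear_combination σ (σ x) * hy - σ (σ y) * hx)
      (by linear_combination σ (σ x) * hy1 - σ (σ y) * hx1)
      (by linear_combination σ (σ x) * hy2 - σ (σ y) * hx2)
    rw [← this, pow_succ, ← hσ]
    simp only [det₃]
    ring
  · refine card_le_of_bilinear_roots hq (c₃ := σ (σ (σ a₃)))
      (c₂ := -(a₀ * σ (σ (σ a₃))) + a₂ * σ (σ (σ a₁)))
      (c₁ := -(σ a₀ * σ (σ (σ a₃)) - σ a₁ * σ (σ (σ a₂))))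
      (c₀ := det₃ a₀ a₁ a₂ (σ a₃) (σ a₀) (σ a₁) (σ (σ (σ a₁))) (σ (σ (σ a₂))) (σ (σ (σ a₃))))
      (by simpa using h3) T fun m hm => ?_
    obtain ⟨x, y, hxy, hx, hy⟩ := hT m hm
    have hx1 := congrArg σ hx
    have hx2 := congrArg σ hx1
    have hx3 := congrArg σ hx2
    have hy1 := congrArg σ hy
    have hy2 := congrArg σ hy1
    have hy3 := congrArg σ hy2
    simp only [map_add, map_mul, h4] at hx1 hx2 hy1 hy2 hx3 hy3
    have := det₃_eq_zero (a := a₀ - m) (b := a₁) (c := a₂) (d := σ a₃) (e := σ a₀ - σ m)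
      (f := σ a₁) (g := σ (σ (σ a₁))) (h := σ (σ (σ a₂))) (i := σ (σ (σ a₃)))
      (x := σ (σ (σ y)) * x - σ (σ (σ x)) * y) (y := σ (σ (σ y)) * σ x - σ (σ (σ x)) * σ y)
      (z := σ (σ (σ y)) * σ (σ x) - σ (σ (σ x)) * σ (σ y))
      (by intro e; exact hne hxy (by linear_combination e))
      (by linear_combination σ (σ (σ y)) * hx - σ (σ (σ x)) * hy)
      (by linear_combination σ (σ (σ y)) * hx1 - σ (σ (σ x)) * hy1)
      (by linear_combination σ (σ (σ y)) * hx3 - σ (σ (σ x)) * hy3)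
    rw [← this, pow_succ, ← hσ]
    simp only [det₃]
    ring

/-- The set of `v` where `f` acts as multiplication by `m`. -/
def slopeSpace {F : Type} [Field F] {Fq : Subfield F} (f : F →ₗ[Fq] F) (m : F) : Submodule Fq F :=
  LinearMap.eqLocus f (LinearMap.mulLeft Fq m)

lemma mem_slopeSpace {F : Type} [Field F] {Fq : Subfield F} {f : F →ₗ[Fq] F} {m x : F} :
    x ∈ slopeSpace f m ↔ f x = m * x := Iff.rfl

lemma exists_sum_frobenius {F : Type} [Field F] [Fintype F] {q : ℕ} (hq : 2 ≤ q)
    (hF : Fintype.card F = q ^ 4) (σ : F →+* F) (hσ : ∀ x, σ x = x ^ q) {Fq : Subfield F}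
    (hfix : ∀ t : Fq, σ t = t) (hfr : Module.finrank Fq F = 4) (f : F →ₗ[Fq] F) :
    ∃ a₀ a₁ a₂ a₃ : F, ∀ x, f x = a₀ * x + a₁ * σ x + a₂ * σ (σ x) + a₃ * σ (σ (σ x)) := by
  let Φ : (Fin 4 → F) →ₗ[F] (F →ₗ[Fq] F) :=
    { toFun := fun a =>
        { toFun := fun x => a 0 * x + a 1 * σ x + a 2 * σ (σ x) + a 3 * σ (σ (σ x))
          map_add' := fun x y => by simp only [map_add]; ring
          map_smul' := fun t x => by
            simp only [Subfield.smul_def, smul_eq_mul, map_mul, hfix, RingHom.id_apply]; ring }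
      map_add' := fun a b => by ext x; simp; ring
      map_smul' := fun t a => by ext x; simp; ring }
  have hinj : Function.Injective Φ := by
    rw [injective_iff_map_eq_zero]
    intro a ha
    obtain ⟨h0, h1, h2, h3⟩ := eq_zero_of_sum_frobenius hq hF σ hσ
      (fun x => LinearMap.congr_fun ha x)
    funext i
    fin_cases i
    exacts [h0, h1, h2, h3]
  have hsurj : Function.Surjective Φ := by
    refine (LinearMap.injective_iff_surjective_of_finrank_eq_finrank ?_).1 hinj
    rw [Module.finrank_linearMap_self, hfr]
    simp
  obtain ⟨a, rfl⟩ := hsurj f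
  exact ⟨a 0, a 1, a 2, a 3, fun x => rfl⟩

open Classical in
lemma card_add_card_slopes {F : Type} [Field F] [Fintype F] {Fq : Subfield F} (f : F →ₗ[Fq] F)
    (L : Finset F) (hL : ∀ m, m ∈ L ↔ ∃ x, x ≠ 0 ∧ f x = m * x) :
    Fintype.card F + L.card = 1 + ∑ m ∈ L, Nat.card (slopeSpace f m) := by
  have h1 : (Finset.univ.erase (0 : F)).card =
      ∑ m ∈ L, ((Finset.univ.erase (0 : F)).filter fun x => f x / x = m).card := by
    refine Finset.card_eq_sum_card_fiberwise fun x hx => ?_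
    have hx0 : x ≠ 0 := by simpa using hx
    exact (hL _).2 ⟨x, hx0, by field_simp⟩
  have h2 : ∀ m ∈ L, Nat.card (slopeSpace f m) =
      ((Finset.univ.erase (0 : F)).filter fun x => f x / x = m).card + 1 := by
    intro m _
    rw [← Finset.card_insert_of_notMem (a := (0 : F)) (by simp), Nat.card_eq_fintype_card,
      Fintype.card_subtype]
    congr 1
    ext x
    by_cases hx : x = 0
    · simp [hx]
    · simp [hx, mem_slopeSpace, div_eq_iff]
  rw [Finset.sum_congr rfl h2, Finset.sum_add_distrib, ← h1, Finset.card_erase_of_mem (by simp),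
    Finset.card_univ]
  have : 0 < Fintype.card F := Fintype.card_pos
  simp
  omega

lemma card_le_card_slopes {F : Type} [Field F] [Fintype F] {q : ℕ} (hq : 2 ≤ q)
    (hF : Fintype.card F = q ^ 4) (σ : F →+* F) (hσ : ∀ x, σ x = x ^ q)
    (h4 : ∀ x, σ (σ (σ (σ x))) = x) {Fq : Subfield F} (hFq : Nat.card Fq = q)
    (hfr : Module.finrank Fq F = 4) (f : F →ₗ[Fq] F) {a₀ a₁ a₂ a₃ : F}
    (hf : ∀ x, f x = a₀ * x + a₁ * σ x + a₂ * σ (σ x) + a₃ * σ (σ (σ x)))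
    (ha : ¬ (a₁ = 0 ∧ a₃ = 0))
    (L : Finset F) (hL : ∀ m, m ∈ L ↔ ∃ x, x ≠ 0 ∧ f x = m * x) :
    q ^ 4 + L.card + q ≤ 1 + L.card * q + q ^ 3 := by
  classical
  have hcard : ∀ m, Nat.card (slopeSpace f m) = q ^ Module.finrank Fq (slopeSpace f m) := by
    intro m; rw [Module.natCard_eq_pow_finrank (K := Fq), hFq]
  have hdisj : ∀ m n, m ≠ n →
      Module.finrank Fq (slopeSpace f m) + Module.finrank Fq (slopeSpace f n) ≤ 4 := by
    intro m n hmn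
    rw [← hfr]
    refine Submodule.finrank_add_finrank_le_of_disjoint ?_
    rw [Submodule.disjoint_def]
    intro x hx hy
    rw [mem_slopeSpace] at hx hy
    rw [hx] at hy
    by_contra hx0
    exact hmn (mul_right_cancel₀ hx0 hy)
  have hlt : ∀ m, Module.finrank Fq (slopeSpace f m) ≤ 3 := by
    intro m
    by_contra! h
    have hle : Module.finrank Fq (slopeSpace f m) ≤ Module.finrank Fq F := Submodule.finrank_le _
    have htop : slopeSpace f m = ⊤ := Submodule.eq_top_of_finrank_eq (by omega)
    obtain ⟨-, h1, -, h3⟩ := eq_zero_of_sum_frobenius hq hF σ hσ (a₀ := a₀ - m) (a₁ := a₁)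
      (a₂ := a₂) (a₃ := a₃) (fun x => by
        have hx : x ∈ slopeSpace f m := htop ▸ Submodule.mem_top
        rw [mem_slopeSpace, hf] at hx
        linear_combination hx)
    exact ha ⟨h1, h3⟩
  have hT : ((L.filter fun m => 2 ≤ Module.finrank Fq (slopeSpace f m))).card ≤ q + 1 := by
    refine card_heavy_slopes_le (a₀ := a₀) (a₂ := a₂) hq σ hσ h4 ha _ fun m hm => ?_
    rw [Finset.mem_filter] at hm
    obtain ⟨x, hx0, hx⟩ := (hL m).1 hm.1
    by_contra! hxy
    have hsub : ∀ y ∈ slopeSpace f m, x * y ^ q = y * x ^ q := by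
      intro y hy
      by_contra hne
      refine hxy x y ?_ (by rw [← hf, hx]) (by rw [← hf]; exact hy)
      rwa [hσ, hσ]
    open Polynomial in
    let P : F[X] := C x * X ^ q - C (x ^ q) * X
    have hcoeff : P.coeff q = x := by
      have h1 : 1 ≠ q := by omega
      rw [Polynomial.coeff_sub, Polynomial.coeff_C_mul_X_pow, if_pos rfl, Polynomial.coeff_C_mul,
        Polynomial.coeff_X, if_neg h1, mul_zero, sub_zero]
    have hP : P ≠ 0 := by
      intro h; rw [h, Polynomial.coeff_zero] at hcoeff; exact hx0 hcoeff.symm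
    have hdeg : P.natDegree ≤ q := by
      refine (Polynomial.natDegree_sub_le _ _).trans (max_le ?_ ?_)
      · exact Polynomial.natDegree_C_mul_X_pow_le _ _
      · exact (Polynomial.natDegree_C_mul_le _ _).trans (Polynomial.natDegree_X_le.trans (by omega))
    have hle : (Finset.univ.filter (· ∈ slopeSpace f m)).card ≤ q := by
      refine (Polynomial.card_le_degree_of_subset_roots (p := P) fun y hy => ?_).trans hdeg
      have hy' : y ∈ slopeSpace f m := by simpa using hy
      rw [Polynomial.mem_roots hP, Polynomial.IsRoot.def]
      simp only [P, Polynomial.eval_sub, Polynomial.eval_mul, Polynomial.eval_C,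
        Polynomial.eval_pow, Polynomial.eval_X, hsub y hy']
      ring
    rw [← Fintype.card_subtype, ← Nat.card_eq_fintype_card, hcard] at hle
    have : q ^ 2 ≤ q ^ Module.finrank Fq (slopeSpace f m) := Nat.pow_le_pow_right (by omega) hm.2
    nlinarith
  have hsum := card_add_card_slopes f L hL
  rw [hF] at hsum
  have hq2 : q ≤ q ^ 2 := by nlinarith
  have hq3 : q ≤ q ^ 3 := Nat.le_self_pow (by omega) q
  suffices h : ∑ m ∈ L, Nat.card (slopeSpace f m) + q ≤ L.card * q + q ^ 3 by omega
  by_cases hw : ∃ m ∈ L, 3 ≤ Module.finrank Fq (slopeSpace f m)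
  · obtain ⟨m, hm, hm3⟩ := hw
    have hm' : Nat.card (slopeSpace f m) ≤ q ^ 3 := by
      rw [hcard]; exact Nat.pow_le_pow_right (by omega) (hlt m)
    have hrest : ∑ n ∈ L.erase m, Nat.card (slopeSpace f n) ≤ (L.erase m).card * q := by
      rw [← smul_eq_mul]
      refine Finset.sum_le_card_nsmul _ _ _ fun n hn => ?_
      have := hdisj m n (Finset.ne_of_mem_erase hn).symm
      rw [hcard]
      calc q ^ Module.finrank Fq (slopeSpace f n) ≤ q ^ 1 :=
            Nat.pow_le_pow_right (by omega) (by omega)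
        _ = q := pow_one q
    rw [← Finset.add_sum_erase L _ hm, ← Finset.card_erase_add_one hm]
    linarith
  · push Not at hw
    have hbound : ∀ m ∈ L, Nat.card (slopeSpace f m) ≤
        q + if 2 ≤ Module.finrank Fq (slopeSpace f m) then q ^ 2 - q else 0 := by
      intro m hm
      rw [hcard]
      have := hw m hm
      split_ifs with h
      · rw [show Module.finrank Fq (slopeSpace f m) = 2 by omega]; omega
      · calc q ^ Module.finrank Fq (slopeSpace f m) ≤ q ^ 1 :=
              Nat.pow_le_pow_right (by omega) (by omega)
          _ = q + 0 := by simp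
    have := Finset.sum_le_sum hbound
    rw [Finset.sum_add_distrib, ← Finset.sum_filter, Finset.sum_const, Finset.sum_const,
      smul_eq_mul, smul_eq_mul] at this
    have h5 := Nat.mul_le_mul_right (q ^ 2 - q) hT
    have h6 : (q + 1) * (q ^ 2 - q) + q = q ^ 3 := by
      zify [hq2]; ring
    omega

lemma exists_subfield_card_sq {F : Type} [Field F] [Fintype F] {p e q : ℕ} (hp : p.Prime)
    (he : 0 < e) (hqp : q = p ^ e) (hF : Fintype.card F = q ^ 4) [CharP F p] :
    ∃ E : Subfield F, Nat.card E = q ^ 2 := by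
  have := Fact.mk hp
  let := ZMod.algebra F p
  have h1 : Module.finrank (ZMod p) (GaloisField p (2 * e)) ∣ Module.finrank (ZMod p) F := by
    rw [GaloisField.finrank p (by omega)]
    have h2 : p ^ Module.finrank (ZMod p) F = p ^ (4 * e) := by
      rw [FiniteField.pow_finrank_eq_card p, hF, hqp, ← pow_mul, mul_comm]
    rw [Nat.pow_right_injective hp.two_le h2]
    exact ⟨2, by ring⟩
  obtain ⟨φ⟩ := FiniteField.nonempty_algHom_of_finrank_dvd h1
  refine ⟨φ.toRingHom.fieldRange, ?_⟩
  have := Nat.card_congr (φ.toRingHom.rangeRestrictFieldEquiv).toEquiv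
  rw [← this, GaloisField.card p _ (by omega), hqp, ← pow_mul, mul_comm]

lemma span_mem_linSet_iff {F : Type} [Field F] (S : Set (F × F)) (c m : F) :
    Submodule.span F {(m, 1 + c * m)} ∈ linSet F S ↔
      ∃ v ∈ S, v ≠ 0 ∧ v.1 = m * (v.2 - c * v.1) := by
  refine exists_congr fun v => and_congr_right fun _ => and_congr_right fun hv => ?_
  rw [Submodule.span_singleton_eq_span_singleton]
  constructor
  · rintro ⟨z, rfl⟩
    simp only [Prod.smul_fst, Prod.smul_snd, Units.smul_def, smul_eq_mul]
    ring
  · intro h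
    have hy : v.2 - c * v.1 ≠ 0 := by
      intro hy
      rw [hy, mul_zero] at h
      rw [h, mul_zero, sub_zero] at hy
      exact hv (Prod.ext h hy)
    refine ⟨Units.mk0 _ hy, Prod.ext ?_ ?_⟩
    · simp only [Units.smul_mk0, Prod.smul_fst, smul_eq_mul]
      linear_combination -h
    · simp only [Units.smul_mk0, Prod.smul_snd, smul_eq_mul]
      linear_combination -c * h

lemma span_mem_linSet_iff' {F : Type} [Field F] (S : Set (F × F)) (c : F) :
    Submodule.span F {((1 : F), c)} ∈ linSet F S ↔ ∃ v ∈ S, v ≠ 0 ∧ v.2 - c * v.1 = 0 := by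
  refine exists_congr fun v => and_congr_right fun _ => and_congr_right fun hv => ?_
  rw [Submodule.span_singleton_eq_span_singleton]
  constructor
  · rintro ⟨z, rfl⟩
    simp only [Prod.smul_fst, Prod.smul_snd, Units.smul_def, smul_eq_mul]
    ring
  · intro h
    have hy : v.1 ≠ 0 := by
      intro hy
      rw [hy, mul_zero, sub_zero] at h
      exact hv (Prod.ext hy h)
    refine ⟨Units.mk0 _ hy, Prod.ext ?_ ?_⟩
    · simp only [Units.smul_mk0, Prod.smul_fst, smul_eq_mul, mul_one]
    · simp only [Units.smul_mk0, Prod.smul_snd, smul_eq_mul]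
      linear_combination -h

/-- The linear form `(x, y) ↦ y - c x`. -/
def slantForm {F : Type} [Field F] (Fq : Subfield F) (c : F) : F × F →ₗ[Fq] F :=
  LinearMap.snd Fq F F - (LinearMap.mulLeft Fq c).comp (LinearMap.fst Fq F F)

lemma injective_slantForm {F : Type} [Field F] {Fq : Subfield F} {U : Submodule Fq (F × F)} {c : F}
    (hc : ∀ u ∈ U, u ≠ 0 → u.2 - c * u.1 ≠ 0) :
    Function.Injective ((slantForm Fq c).domRestrict U) := by
  rw [injective_iff_map_eq_zero]
  rintro ⟨u, hu⟩ h
  by_contra hne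
  exact hc u hu (fun h0 => hne (Subtype.ext h0)) h

lemma exists_forall_ne_slant {F : Type} [Field F] [Fintype F] {Fq : Subfield F}
    {U : Submodule Fq (F × F)} (hU : Nat.card U ≤ Fintype.card F) :
    ∃ c : F, ∀ u ∈ U, u ≠ 0 → u.2 - c * u.1 ≠ 0 := by
  classical
  by_contra! h
  choose u hu hu0 huc using h
  have hne : ∀ c, (u c).1 ≠ 0 := fun c h1 => hu0 c
    (Prod.ext h1 (by have := huc c; rwa [h1, mul_zero, sub_zero] at this))
  have hinj : Function.Injective fun c : Option F =>
      (c.elim 0 fun c => ⟨u c, hu c⟩ : U) := by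
    rintro (_ | c) (_ | d) hcd
    · rfl
    · exact absurd (congrArg Subtype.val hcd).symm (hu0 d)
    · exact absurd (congrArg Subtype.val hcd) (hu0 c)
    · have h1 : u c = u d := congrArg Subtype.val hcd
      have h2 := huc c
      have h3 := huc d
      rw [← h1] at h3
      have h4 : (c - d) * (u c).1 = 0 := by linear_combination h3 - h2
      rw [sub_eq_zero.1 ((mul_eq_zero.1 h4).resolve_right (hne c))]
  have := Nat.card_le_card_of_injective _ hinj
  rw [Nat.card_eq_fintype_card, Fintype.card_option] at this
  omega

lemma exists_mem_iff_of_finrank_eq {F : Type} [Field F] [Fintype F] {Fq : Subfield F}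
    {U : Submodule Fq (F × F)} (hU : Module.finrank Fq U = Module.finrank Fq F) {c : F}
    (hc : ∀ u ∈ U, u ≠ 0 → u.2 - c * u.1 ≠ 0) :
    ∃ f : F →ₗ[Fq] F, ∀ w, w ∈ U ↔ w.1 = f (w.2 - c * w.1) := by
  let Φ := LinearEquiv.ofInjectiveOfFinrankEq ((slantForm Fq c).domRestrict U)
    (injective_slantForm hc) hU
  have hΦ : ∀ u : U, Φ u = u.1.2 - c * u.1.1 := fun u => rfl
  refine ⟨(LinearMap.fst Fq F F).comp (U.subtype.comp Φ.symm.toLinearMap), fun w => ?_⟩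
  simp only [LinearMap.comp_apply, LinearEquiv.coe_coe, Submodule.subtype_apply,
    LinearMap.fst_apply]
  constructor
  · intro hw
    rw [← hΦ ⟨w, hw⟩, LinearEquiv.symm_apply_apply]
  · intro hw
    have h := hΦ (Φ.symm (w.2 - c * w.1))
    rw [LinearEquiv.apply_symm_apply, ← hw] at h
    have : w = (Φ.symm (w.2 - c * w.1) : F × F) := Prod.ext hw (by linear_combination h)
    rw [this]
    exact Subtype.prop _

lemma exists_ne_zero_slope_iff {F : Type} [Field F] {Fq : Subfield F}
    {U : Submodule Fq (F × F)} {c : F} {f : F →ₗ[Fq] F}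
    (hf : ∀ w, w ∈ U ↔ w.1 = f (w.2 - c * w.1)) (m : F) :
    (∃ v ∈ U, v ≠ 0 ∧ v.1 = m * (v.2 - c * v.1)) ↔ ∃ x, x ≠ 0 ∧ f x = m * x := by
  constructor
  · rintro ⟨v, hv, hv0, h⟩
    refine ⟨v.2 - c * v.1, fun hy => hv0 ?_, ((hf v).1 hv).symm.trans h⟩
    rw [hy, mul_zero] at h
    rw [h, mul_zero, sub_zero] at hy
    exact Prod.ext h hy
  · rintro ⟨x, hx0, hx⟩
    refine ⟨(f x, x + c * f x), (hf _).2 ?_, ?_, ?_⟩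
    · simp
    · intro h
      rw [Prod.mk_eq_zero] at h
      rw [h.1, mul_zero, add_zero] at h
      exact hx0 h.2
    · simp only [add_sub_cancel_right]
      exact hx

lemma exists_submodule_coe_eq {F : Type} [Field F] {Fq E : Subfield F} (σ : F →+* F)
    (hE : ∀ t ∈ E, σ (σ t) = t) {U : Submodule Fq (F × F)} {c : F} {f : F →ₗ[Fq] F}
    (hf : ∀ w, w ∈ U ↔ w.1 = f (w.2 - c * w.1)) {a₀ a₂ : F}
    (hfa : ∀ x, f x = a₀ * x + a₂ * σ (σ x)) :
    ∃ U' : Submodule E (F × F), (U' : Set (F × F)) = U := by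
  refine ⟨{ carrier := U, add_mem' := U.add_mem, zero_mem' := U.zero_mem, smul_mem' := ?_ }, rfl⟩
  rintro t w hw
  have hw' := (hf w).1 hw
  rw [hfa] at hw'
  refine (hf _).2 ?_
  rw [hfa]
  simp only [Prod.smul_fst, Prod.smul_snd, Subfield.smul_def, smul_eq_mul, map_sub, map_mul,
    hE _ t.2] at hw' ⊢
  linear_combination (t : F) * hw'

lemma mem_perp_iff {F : Type} [Field F] [Fintype F] {q : ℕ} (hq : 2 ≤ q)
    (hF : Fintype.card F = q ^ 4) (σ : F →+* F) (hσ : ∀ x, σ x = x ^ q)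
    (h4 : ∀ x, σ (σ (σ (σ x))) = x) {Fq : Subfield F}
    {U : Submodule Fq (F × F)} {c : F} {f : F →ₗ[Fq] F}
    (hf : ∀ w, w ∈ U ↔ w.1 = f (w.2 - c * w.1)) {a₀ a₁ a₂ a₃ : F}
    (hfa : ∀ x, f x = a₀ * x + a₁ * σ x + a₂ * σ (σ x) + a₃ * σ (σ (σ x))) (w : F × F) :
    (∀ s ∈ U, (∑ i ∈ Finset.range 4, (w.1 * s.2 - w.2 * s.1) ^ q ^ i) = 0) ↔
      w.1 = a₀ * (w.2 - c * w.1) + σ a₃ * σ (w.2 - c * w.1) +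
        σ (σ a₂) * σ (σ (w.2 - c * w.1)) + σ (σ (σ a₁)) * σ (σ (σ (w.2 - c * w.1))) := by
  have htr : ∀ t : F, ∑ i ∈ Finset.range 4, t ^ q ^ i = t + σ t + σ (σ t) + σ (σ (σ t)) := by
    intro t
    simp only [Finset.sum_range_succ, Finset.sum_range_zero, hσ, ← pow_mul]
    ring
  simp only [htr]
  generalize hy : w.2 - c * w.1 = y
  have hw2 : w.2 = y + c * w.1 := by linear_combination hy
  set d := w.1 - (a₀ * y + σ a₃ * σ y + σ (σ a₂) * σ (σ y) + σ (σ (σ a₁)) * σ (σ (σ y))) with hd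
  have key : ∀ z, (w.1 * (z + c * f z) - w.2 * f z) + σ (w.1 * (z + c * f z) - w.2 * f z) +
      σ (σ (w.1 * (z + c * f z) - w.2 * f z)) + σ (σ (σ (w.1 * (z + c * f z) - w.2 * f z))) =
      d * z + σ d * σ z + σ (σ d) * σ (σ z) + σ (σ (σ d)) * σ (σ (σ z)) := by
    intro z
    have h1 : w.1 * (z + c * f z) - w.2 * f z = w.1 * z - y * f z := by rw [hw2]; ring
    rw [h1, hfa, hd]
    simp only [map_sub, map_add, map_mul, h4]
    ring
  rw [← sub_eq_zero (a := w.1)]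
  constructor
  · intro h
    refine (eq_zero_of_sum_frobenius hq hF σ hσ (a₀ := d) (a₁ := σ d) (a₂ := σ (σ d))
      (a₃ := σ (σ (σ d))) fun z => ?_).1
    rw [← key]
    exact h (f z, z + c * f z) ((hf _).2 (by simp))
  · intro h s hs
    change d = 0 at h
    have hs1 := (hf s).1 hs
    have hs2 : s.2 = (s.2 - c * s.1) + c * f (s.2 - c * s.1) := by rw [← hs1]; ring
    have := key (s.2 - c * s.1)
    rw [← hs2, ← hs1, h] at this
    simpa using this

lemma card_slopes_mul_le {F : Type} [Field F] [Fintype F] {Fq : Subfield F}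
    {V : Submodule Fq (F × F)} {c : F} (L : Finset F)
    (hL : ∀ m ∈ L, ∃ v ∈ V, v ≠ 0 ∧ v.1 = m * (v.2 - c * v.1)) :
    L.card * Nat.card Fq + 1 ≤ Nat.card V + L.card := by
  classical
  choose! v hv hv0 hvm using hL
  have hy : ∀ m ∈ L, (v m).2 - c * (v m).1 ≠ 0 := by
    intro m hm hy
    have h := hvm m hm
    rw [hy, mul_zero] at h
    rw [h, mul_zero, sub_zero] at hy
    exact hv0 m hm (Prod.ext h hy)
  have hcard : (L ×ˢ Finset.univ.erase (0 : Fq)).card ≤ (Finset.univ.erase (0 : V)).card := by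
    refine Finset.card_le_card_of_injOn
      (fun a => if h : a.1 ∈ L then a.2 • (⟨v a.1, hv a.1 h⟩ : V) else 0) ?_ ?_
    · rintro ⟨m, t⟩ ha
      obtain ⟨hm, ht⟩ := Finset.mem_product.1 ha
      have ht0 : t ≠ 0 := Finset.ne_of_mem_erase ht
      change m ∈ L at hm
      simp only [hm, dif_pos, Finset.coe_erase, Finset.coe_univ, Set.mem_sdiff, Set.mem_univ,
        Set.mem_singleton_iff, true_and, smul_eq_zero, not_or]
      exact ⟨ht0, fun h => hv0 m hm (congrArg Subtype.val h)⟩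
    · rintro ⟨m, t⟩ ha ⟨n, s⟩ hb hab
      obtain ⟨hm, ht⟩ := Finset.mem_product.1 ha
      obtain ⟨hn, hs⟩ := Finset.mem_product.1 hb
      have ht0 : (t : F) ≠ 0 := fun h => Finset.ne_of_mem_erase ht (Subtype.ext h)
      change m ∈ L at hm
      change n ∈ L at hn
      simp only [hm, hn, dif_pos] at hab
      have hab' : t • v m = s • v n := congrArg Subtype.val hab
      have e1 : (t : F) * (v m).1 = s * (v n).1 := congrArg Prod.fst hab'
      have e2 : (t : F) * (v m).2 = s * (v n).2 := congrArg Prod.snd hab'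
      have hym := hy m hm
      have e3 : (t : F) * ((v m).2 - c * (v m).1) = s * ((v n).2 - c * (v n).1) := by
        linear_combination e2 - c * e1
      have e4 : (m - n) * (t * ((v m).2 - c * (v m).1)) = 0 := by
        linear_combination e1 - t * hvm m hm + s * hvm n hn - n * e3
      have hmn : m = n := sub_eq_zero.1 ((mul_eq_zero.1 e4).resolve_right (mul_ne_zero ht0 hym))
      subst hmn
      rw [Prod.mk.injEq]
      exact ⟨rfl, Subtype.ext (mul_right_cancel₀ hym e3)⟩
  rw [Finset.card_product, Finset.card_erase_of_mem (by simp), Finset.card_erase_of_mem (by simp),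
    Finset.card_univ, Finset.card_univ, ← Nat.card_eq_fintype_card,
    ← Nat.card_eq_fintype_card] at hcard
  have h1 : 0 < Nat.card Fq := Nat.card_pos
  have h2 : 0 < Nat.card V := Nat.card_pos
  have h3 : L.card * Nat.card Fq = L.card * (Nat.card Fq - 1) + L.card := by
    obtain ⟨k, hk⟩ := Nat.exists_eq_succ_of_ne_zero h1.ne'
    rw [hk, Nat.succ_sub_one, Nat.mul_succ]
  omega

/-- if `U` is an `F_q`-subspace of `W = F_{q^4} × F_{q^4}` of rank 4 whose
linear set has maximum field of linearity `F_q`, and `V` is an `F_q`-subspace with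
`L_V = L_U`, then `V = μU` or `V = μ(U^{⊥'})` for some nonzero `μ`, where `⊥'` is taken
with respect to `η'((x,y),(u,v)) = Tr_{q^4/q}(xv - yu)`. -/
theorem stmt_9 (p e q : ℕ) (hp : p.Prime) (he : 0 < e) (hq : q = p ^ e)
    (F : Type) [Field F] [Fintype F] (hF : Fintype.card F = q ^ 4)
    (Fq : Subfield F) (hFq : Nat.card Fq = q)
    (U : Submodule Fq (F × F)) (hU : Module.finrank Fq U = 4)
    (hmax : ∀ m : ℕ, m ∣ 4 → 1 < m → ∀ E : Subfield F, Nat.card E = q ^ m →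
      ∀ U' : Submodule E (F × F), linSet F (U' : Set (F × F)) ≠ linSet F (U : Set (F × F)))
    (V : Submodule Fq (F × F))
    (hV : linSet F (V : Set (F × F)) = linSet F (U : Set (F × F))) :
    ∃ μ : F, μ ≠ 0 ∧
      ((V : Set (F × F)) = (fun w : F × F => μ • w) '' (U : Set (F × F)) ∨
        (V : Set (F × F)) = (fun w : F × F => μ • w) ''
          {w : F × F | ∀ s ∈ U,
            (∑ i ∈ Finset.range 4, (w.1 * s.2 - w.2 * s.1) ^ q ^ i) = 0}) := by
  classical
  have hq2 : 2 ≤ q := hq ▸ hp.two_le.trans (Nat.le_self_pow he.ne' p)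
  have := Fact.mk hp
  have : CharP F p := by
    obtain ⟨p', hp'⟩ := CharP.exists F
    have := Fact.mk (CharP.char_is_prime F p')
    obtain ⟨n, hn'⟩ := FiniteField.card F p'
    have h1 : p ∣ p' ^ (n : ℕ) := by
      rw [← hn'.2, hF, hq, ← pow_mul]
      exact dvd_pow_self p (by omega)
    rwa [(Nat.prime_dvd_prime_iff_eq hp hn'.1).1 (hp.dvd_of_dvd_pow h1)]
  have hfr : Module.finrank Fq F = 4 := by
    have h1 := Module.natCard_eq_pow_finrank (K := Fq) (V := F)
    rw [Nat.card_eq_fintype_card, hF, hFq] at h1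
    exact (Nat.pow_right_injective hq2 h1).symm
  let σ : F →+* F := iterateFrobenius F p e
  have hσ : ∀ x, σ x = x ^ q := fun x => by rw [hq]; exact iterateFrobenius_def p e x
  have h4 : ∀ x, σ (σ (σ (σ x))) = x := fun x => by
    simp only [hσ, ← pow_mul]
    rw [show q * q * q * q = Fintype.card F by rw [hF]; ring]
    exact FiniteField.pow_card x
  have hfix : ∀ t : Fq, σ t = t := fun t => by
    have h1 := FiniteField.pow_card t
    rw [← Nat.card_eq_fintype_card, hFq] at h1
    rw [hσ]
    exact_mod_cast congrArg Subtype.val h1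
  obtain ⟨c, hcU⟩ := exists_forall_ne_slant (U := U) (by
    rw [Module.natCard_eq_pow_finrank (K := Fq), hFq, hU, hF])
  have hcV : ∀ v ∈ V, v ≠ 0 → v.2 - c * v.1 ≠ 0 := by
    intro v hv hv0 h
    have h1 := (span_mem_linSet_iff' (V : Set (F × F)) c).2 ⟨v, hv, hv0, h⟩
    rw [hV, span_mem_linSet_iff'] at h1
    obtain ⟨u, hu, hu0, h2⟩ := h1
    exact hcU u hu hu0 h2
  obtain ⟨f, hf⟩ := exists_mem_iff_of_finrank_eq (hU.trans hfr.symm) hcU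
  obtain ⟨a₀, a₁, a₂, a₃, hfa⟩ := exists_sum_frobenius hq2 hF σ hσ hfix hfr f
  have ha : ¬ (a₁ = 0 ∧ a₃ = 0) := by
    rintro ⟨rfl, rfl⟩
    obtain ⟨E, hE⟩ := exists_subfield_card_sq hp he hq hF
    have hE' : ∀ t ∈ E, σ (σ t) = t := fun t ht => by
      have h1 := FiniteField.pow_card (⟨t, ht⟩ : E)
      rw [← Nat.card_eq_fintype_card, hE, pow_two, pow_mul] at h1
      rw [hσ, hσ]
      exact congrArg Subtype.val h1
    obtain ⟨U', hU'⟩ := exists_submodule_coe_eq σ hE' hf (a₀ := a₀) (a₂ := a₂)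
      (fun x => by rw [hfa]; ring)
    exact hmax 2 (by norm_num) (by norm_num) E hE U' (by rw [hU'])
  have hslopes : ∀ m, (∃ v ∈ V, v ≠ 0 ∧ v.1 = m * (v.2 - c * v.1)) ↔
      ∃ x, x ≠ 0 ∧ f x = m * x := by
    intro m
    rw [← exists_ne_zero_slope_iff hf]
    have h1 := span_mem_linSet_iff (V : Set (F × F)) c m
    rw [hV] at h1
    exact h1.symm.trans (span_mem_linSet_iff (U : Set (F × F)) c m)
  have hVfr : Module.finrank Fq V = Module.finrank Fq F := by
    refine le_antisymm (LinearMap.finrank_le_finrank_of_injective (injective_slantForm hcV)) ?_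
    by_contra! hlt
    let L : Finset F := Finset.univ.filter fun m => ∃ x, x ≠ 0 ∧ f x = m * x
    have hL : ∀ m, m ∈ L ↔ ∃ x, x ≠ 0 ∧ f x = m * x := by simp [L]
    have h1 := card_le_card_slopes hq2 hF σ hσ h4 hFq hfr f hfa ha L hL
    have h2 := card_slopes_mul_le (V := V) (c := c) L fun m hm => (hslopes m).2 ((hL m).1 hm)
    have h3 : Nat.card V ≤ q ^ 3 := by
      rw [Module.natCard_eq_pow_finrank (K := Fq), hFq]
      exact Nat.pow_le_pow_right (by omega) (by omega)
    rw [hFq] at h2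
    have h5 : 2 * q ^ 3 ≤ q ^ 4 := by
      rw [pow_succ q 3, mul_comm]
      exact Nat.mul_le_mul_left _ hq2
    omega
  obtain ⟨g, hg⟩ := exists_mem_iff_of_finrank_eq hVfr hcV
  obtain ⟨b₀, b₁, b₂, b₃, hgb⟩ := exists_sum_frobenius hq2 hF σ hσ hfix hfr g
  obtain ⟨rfl, h⟩ := eq_and_isTwist_of_same_slopes (a₀ := a₀) (a₁ := a₁) (a₂ := a₂) (a₃ := a₃)
    (b₀ := b₀) (b₁ := b₁) (b₂ := b₂) (b₃ := b₃) hq2 hF σ hσ h4 fun m => by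
      simp only [← hfa, ← hgb]
      rw [← hslopes m, exists_ne_zero_slope_iff hg]
  have htwist : ∀ (d₁ d₂ d₃ : F) (S : Set (F × F)),
      (∀ w, w ∈ S ↔ w.1 = a₀ * (w.2 - c * w.1) + d₁ * σ (w.2 - c * w.1) +
        d₂ * σ (σ (w.2 - c * w.1)) + d₃ * σ (σ (σ (w.2 - c * w.1)))) →
      IsTwist σ d₁ d₂ d₃ b₁ b₂ b₃ →
      ∃ μ : F, μ ≠ 0 ∧ (V : Set (F × F)) = (fun w : F × F => μ • w) '' S := by
    rintro d₁ d₂ d₃ S hS ⟨l, hl, e1, e2, e3⟩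
    refine ⟨l⁻¹, inv_ne_zero hl, ?_⟩
    have hmem : ∀ w, w ∈ V ↔ l • w ∈ S := by
      intro w
      rw [hg, hgb, hS]
      have : l * w.2 - c * (l * w.1) = l * (w.2 - c * w.1) := by ring
      simp only [Prod.smul_fst, Prod.smul_snd, smul_eq_mul, this, map_mul]
      generalize w.2 - c * w.1 = y
      rw [← mul_right_inj' hl]
      have : l * (a₀ * y + b₁ * σ y + b₂ * σ (σ y) + b₃ * σ (σ (σ y))) =
          a₀ * (l * y) + d₁ * (σ l * σ y) + d₂ * (σ (σ l) * σ (σ y)) +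
          d₃ * (σ (σ (σ l)) * σ (σ (σ y))) := by
        linear_combination σ y * e1 + σ (σ y) * e2 + σ (σ (σ y)) * e3
      rw [this]
    ext w
    constructor
    · intro hw
      exact ⟨l • w, (hmem w).1 hw, by simp [smul_smul, hl]⟩
    · rintro ⟨u, hu, rfl⟩
      refine (hmem _).2 ?_
      simpa [smul_smul, hl] using hu
  rcases h with h | h
  · obtain ⟨μ, hμ, hμU⟩ := htwist _ _ _ U (fun w => by rw [SetLike.mem_coe, hf, hfa]) h
    exact ⟨μ, hμ, Or.inl hμU⟩
  · obtain ⟨μ, hμ, hμU⟩ := htwist _ _ _ _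
      (fun w => mem_perp_iff hq2 hF σ hσ h4 hf hfa w) h
    exact ⟨μ, hμ, Or.inr hμU⟩
end
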